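/- Let S be a positive signature, 𝕂 a field of characteristic zero, and f', f'' reduced S-forests. Then in the algebra N(S) one has H_{f'} · H_{f''} = H_{f' △ f''}. -/

import Mathlib

open scoped BigOperators

/-- An `S`-term over a signature given by a type `S` of generators with arity map `ar`. -/
inductive STerm (S : Type) (ar : S → ℕ) : Type
  | leaf : STerm S ar
  | node (g : S) (c : Fin (ar g) → STerm S ar) : STerm S ar

namespace STerm

variable {S : Type} {ar : S → ℕ}

/-- The arity of a term: its number of leaves. -/
def arity : STerm S ar → ℕ
  | leaf => 1
  | node _ c => ∑ i, (c i).arity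

/-- The degree of a term: its number of internal nodes. -/
def degree : STerm S ar → ℕ
  | leaf => 0
  | node _ c => 1 + ∑ i, (c i).degree

/-- The word of decorations of internal nodes along left-to-right preorder traversal. -/
def decs : STerm S ar → List S
  | leaf => []
  | node g c => g :: (List.ofFn fun i => (c i).decs).flatten

/-- Grafting `t⟨l⟩`: the `i`-th leaf (left-to-right) is replaced by the `i`-th entry of `l`. -/
def graftList : STerm S ar → List (STerm S ar) → STerm S ar
  | leaf, l => l.headD leaf
  | node g c, l =>
      node g fun i =>
        (c i).graftList
          ((l.drop (∑ j : Fin (ar g), if (j : ℕ) < (i : ℕ) then (c j).arity else 0)).take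
            (c i).arity)

/-- Grafting a term at the rightmost leaf. -/
def graftRight : STerm S ar → STerm S ar → STerm S ar
  | leaf, s => s
  | node g c, s => node g fun i => if (i : ℕ) = ar g - 1 then (c i).graftRight s else c i

/-- Grafting a term at the leftmost (first) leaf, i.e. `∘₁`. -/
def graftFirst : STerm S ar → STerm S ar → STerm S ar
  | leaf, s => s
  | node g c, s => node g fun i => if (i : ℕ) = 0 then (c i).graftFirst s else c i

/-- Preorder traversal word: `none` for leaves, `some g` for an internal node decorated by `g`. -/
def preo : STerm S ar → List (Option S)
  | leaf => [none]
  | node g c => some g :: (List.ofFn fun i => (c i).preo).flatten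

/-- The number of extremal leaves of a term: leaves which come after every internal
node in the preorder traversal. -/
def extremalCount (t : STerm S ar) : ℕ :=
  (t.preo.reverse.takeWhile fun o => o.isNone).length

/-- The list of edges `(i, j, i')` (`i'` is the `j`-th child of `i`, `j` being 1-based) between
internal nodes, internal nodes being numbered from `0` in preorder. -/
def edges : STerm S ar → List (ℕ × ℕ × ℕ)
  | leaf => []
  | node g c =>
      (List.ofFn fun i : Fin (ar g) =>
        (match c i with
          | leaf => ([] : List (ℕ × ℕ × ℕ))
          | node _ _ =>
            [(0, (i : ℕ) + 1,
               1 + ∑ j : Fin (ar g), if (j : ℕ) < (i : ℕ) then (c j).degree else 0)]) ++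
          (c i).edges.map fun e =>
            (e.1 + (1 + ∑ j : Fin (ar g), if (j : ℕ) < (i : ℕ) then (c j).degree else 0), e.2.1,
              e.2.2 + (1 + ∑ j : Fin (ar g), if (j : ℕ) < (i : ℕ) then (c j).degree else 0))).flatten

/-- The easterly wind move inside a term: a subterm rooted at an internal node which has an
immediate left sibling is detached (replaced by a leaf) and grafted onto the rightmost leaf of
the subtree rooted at this left sibling. -/
inductive TermMove : STerm S ar → STerm S ar → Prop
  | here (g : S) (c : Fin (ar g) → STerm S ar) (j j' : Fin (ar g))
      (hj : (j' : ℕ) = (j : ℕ) + 1) (hne : c j' ≠ leaf) :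
      TermMove (node g c)
        (node g (Function.update (Function.update c j ((c j).graftRight (c j'))) j' leaf))
  | child (g : S) (c : Fin (ar g) → STerm S ar) (i : Fin (ar g)) (t' : STerm S ar) :
      TermMove (c i) t' → TermMove (node g c) (node g (Function.update c i t'))

end STerm
section Forest

variable {S : Type} {ar : S → ℕ}

/-- A forest is reduced when none of its trees is a leaf. -/
def IsReducedF (f : List (STerm S ar)) : Prop := ∀ t ∈ f, t ≠ STerm.leaf

/-- The easterly wind move on forests: either the root of a tree having an immediate left
sibling tree is detached and grafted onto the rightmost leaf of this left sibling, or a move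
happens inside one of the trees. -/
inductive ForestMove : List (STerm S ar) → List (STerm S ar) → Prop
  | root (pre : List (STerm S ar)) (t t' : STerm S ar) (post : List (STerm S ar)) :
      t' ≠ STerm.leaf → ForestMove (pre ++ t :: t' :: post) (pre ++ t.graftRight t' :: post)
  | tree (pre : List (STerm S ar)) (t t' : STerm S ar) (post : List (STerm S ar)) :
      STerm.TermMove t t' → ForestMove (pre ++ t :: post) (pre ++ t' :: post)

/-- The relation `≼`: reflexive and transitive closure of the easterly wind move. -/
def EWLe (f f' : List (STerm S ar)) : Prop := Relation.ReflTransGen ForestMove f f'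

/-- Decoration word of a forest. -/
def forestDecs (f : List (STerm S ar)) : List S := (f.map STerm.decs).flatten

/-- Degree (number of internal nodes) of a forest. -/
def forestDeg (f : List (STerm S ar)) : ℕ := (f.map STerm.degree).sum

/-- Preorder indices (from 0) of the roots of the trees of a forest. -/
def rootIdxs : List (STerm S ar) → List ℕ
  | [] => []
  | t :: r => 0 :: (rootIdxs r).map (· + t.degree)

/-- Edges between internal nodes of a forest, numbered in preorder from 0. -/
def forestEdges : List (STerm S ar) → List (ℕ × ℕ × ℕ)
  | [] => []
  | t :: r => t.edges ++ (forestEdges r).map fun e => (e.1 + t.degree, e.2.1, e.2.2 + t.degree)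

/-- Grafting the terms of `l` onto the successive extremal leaves of `t`. -/
def underSub (t : STerm S ar) (l : List (STerm S ar)) : STerm S ar :=
  t.graftList (List.ofFn (n := t.arity) fun p =>
    if (p : ℕ) < t.arity - t.extremalCount then STerm.leaf
    else l.getD ((p : ℕ) - (t.arity - t.extremalCount)) STerm.leaf)

/-- The under product `f' △ f''` of two forests. -/
def underP (f' f'' : List (STerm S ar)) : List (STerm S ar) :=
  match f'.getLast? with
  | none => f''
  | some t => f'.dropLast ++ underSub t (f''.take t.extremalCount) :: f''.drop t.extremalCount

/-- The term `ι g` of degree 1 whose root is decorated by `g`. -/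
def iotaT (g : S) : STerm S ar := STerm.node g fun _ => STerm.leaf

/-- The minimal forest of the interval `W(w)`. -/
def fmin (w : List S) : List (STerm S ar) := w.map iotaT

/-- The maximal forest of the interval `W(w)`: `ι g₁ ∘₁ ι g₂ ∘₁ ⋯ ∘₁ ι g_ℓ`. -/
def fmax : List S → List (STerm S ar)
  | [] => []
  | g :: gs => [(gs.map iotaT).foldl STerm.graftFirst (iotaT g)]

end Forest
section Alphabet

variable {S : Type} {ar : S → ℕ}

/-- An `S`-forest-like alphabet: a type endowed with a root relation, decoration relations,
and edge relations. -/
structure ForestAlphabet (S : Type) (A : Type) where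
  Root : A → Prop
  Dec : S → A → Prop
  Edge : ℕ → A → A → Prop

/-- `f`-compatibility `w ⊩^A f` of a word `w` over a forest-like alphabet. -/
def ForestAlphabet.Compat {A : Type} (Al : ForestAlphabet S A) (w : List A)
    (f : List (STerm S ar)) : Prop :=
  w.length = forestDeg f ∧
  (∀ (i : ℕ) (hi : i < w.length), i ∈ rootIdxs f → Al.Root (w.get ⟨i, hi⟩)) ∧
  (∀ (i : ℕ) (hi : i < w.length) (hd : i < (forestDecs f).length),
      Al.Dec ((forestDecs f).get ⟨i, hd⟩) (w.get ⟨i, hi⟩)) ∧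
  (∀ p j q, (p, j, q) ∈ forestEdges f → ∀ (hp : p < w.length) (hq : q < w.length),
      Al.Edge j (w.get ⟨p, hp⟩) (w.get ⟨q, hq⟩))

/-- The disjoint sum of two forest-like alphabets. -/
def ForestAlphabet.dsum {A B : Type} (Al : ForestAlphabet S A) (Bl : ForestAlphabet S B) :
    ForestAlphabet S (A ⊕ B) where
  Root := Sum.elim Al.Root Bl.Root
  Dec g := Sum.elim (Al.Dec g) (Bl.Dec g)
  Edge j x y :=
    match x, y with
    | Sum.inl a, Sum.inl a' => Al.Edge j a a'
    | Sum.inr b, Sum.inr b' => Bl.Edge j b b'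
    | Sum.inl _, Sum.inr b => Bl.Root b
    | Sum.inr _, Sum.inl _ => False

/-- The alphabet `𝔸_S` with letters `a_{g,u}`, `g ∈ S`, `u ∈ ℕ*`. -/
def ASAlphabet (S : Type) : ForestAlphabet S (S × List ℕ) where
  Root a := ∃ ℓ, a.2 = List.replicate ℓ 0
  Dec g a := a.1 = g
  Edge j a a' := ∃ ℓ, a'.2 = a.2 ++ j :: List.replicate ℓ 0

/-- The alphabet `A_ℕ` with letters `a_i`, `i ∈ ℕ`, where every letter is a root, every letter
has every decoration, and `a_i →_j a_{i'}` iff `i < i'`. -/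
def ANAlphabet (S : Type) : ForestAlphabet S ℕ where
  Root _ := True
  Dec _ _ := True
  Edge _ i i' := i < i'

/-- The packing of a word of natural numbers. -/
def pck (w : List ℕ) : List ℕ :=
  w.map fun m => ((w.filter (· ≤ m)).dedup).length

end Alphabet
section Algebra

open scoped TensorProduct

variable {S : Type} {ar : S → ℕ}

/-- Reduced `S`-terms. -/
abbrev RTerm (S : Type) (ar : S → ℕ) := {t : STerm S ar // t ≠ STerm.leaf}

/-- The map `rd` keeping the non-leaf entries of a sequence of terms. -/
def rdF : List (STerm S ar) → List (RTerm S ar)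
  | [] => []
  | STerm.leaf :: r => rdF r
  | STerm.node g c :: r => ⟨STerm.node g c, fun h => nomatch h⟩ :: rdF r

/-- The natural Hopf algebra `N(S)` as a module: the monoid algebra of the free monoid on the
set of reduced `S`-terms. -/
abbrev NAlg (𝕂 : Type) [CommSemiring 𝕂] (S : Type) (ar : S → ℕ) :=
  MonoidAlgebra 𝕂 (FreeMonoid (RTerm S ar))

/-- The basis element `E_f` of `N(S)` indexed by a reduced forest `f`. -/
noncomputable def EBasis (𝕂 : Type) [CommSemiring 𝕂] {S : Type} {ar : S → ℕ}
    (f : List (RTerm S ar)) : NAlg 𝕂 S ar :=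
  MonoidAlgebra.of 𝕂 (FreeMonoid (RTerm S ar)) (FreeMonoid.ofList f)

/-- The coproduct `Δ` of `N(S)`, defined linearly on the basis by
`Δ E_f = Σ E_{rd(s₁…s_k)} ⊗ E_{rd(u₁…u_k)}`, the sum ranging over all factorizations
`t_m = s_m⟨ū_m⟩` of the entries of `f`. -/
noncomputable def DeltaN (𝕂 : Type) [CommSemiring 𝕂] (S : Type) (ar : S → ℕ) :
    NAlg 𝕂 S ar →ₗ[𝕂] (NAlg 𝕂 S ar) ⊗[𝕂] (NAlg 𝕂 S ar) :=
  (Finsupp.lift ((NAlg 𝕂 S ar) ⊗[𝕂] (NAlg 𝕂 S ar)) 𝕂 (FreeMonoid (RTerm S ar)) fun m =>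
    ∑ᶠ c ∈ {c : List (STerm S ar × List (STerm S ar)) |
        List.Forall₂ (fun p t => p.2.length = p.1.arity ∧ p.1.graftList p.2 = t.val) c
          (FreeMonoid.toList m)},
      (EBasis 𝕂 (rdF (c.map Prod.fst))) ⊗ₜ[𝕂] (EBasis 𝕂 (rdF (c.flatMap Prod.snd)))) ∘ₗ
    (MonoidAlgebra.coeffLinearEquiv 𝕂).toLinearMap

end Algebra

/-!
Concatenating `a` with another forest and taking the under product of `a` with it are the left and
the right adjoint of one monotone map, which splits a forest after its first `degree a` nodes in
preorder. Expanding `E_a E_b = E_{ab}` over the upper sets of `a` and `b` and inverting, `F_a F_b`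
is the sum of `F` over the fibre of the splitting map above `(a, b)`. Summing over lower sets, the
product `H_a H_b` is the sum of `F` over the forests whose splitting is at most `(a, b)`, that is,
over the lower set of `a △ b`.
-/

namespace EasterlyWind

section Order

open Finset

theorem eq_of_forall_sum_Ici_eq {α M : Type*} [PartialOrder α] [LocallyFiniteOrderTop α]
    [AddCommMonoid M] [IsCancelAdd M] {f g : α → M} {x : α}
    (h : ∀ y, x ≤ y → ∑ z ∈ Ici y, f z = ∑ z ∈ Ici y, g z) : f x = g x := by
  induction hn : #(Ici x) using Nat.strong_induction_on generalizing x with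
  | _ n ih =>
    subst hn
    have h_above : ∑ z ∈ Ioi x, f z = ∑ z ∈ Ioi x, g z := sum_congr rfl fun z hz ↦ by
      have hxz := mem_Ioi.mp hz
      exact ih _ (card_lt_card (Ici_ssubset_Ici.mpr hxz)) (fun y hy ↦ h y (hxz.le.trans hy)) rfl
    have hx := h x le_rfl
    rw [Ici_eq_cons_Ioi, sum_cons, sum_cons, h_above] at hx
    exact add_right_cancel hx

/-- Cancelling the sums over upper sets makes `g` the sum of `f` over the fibres of `s`. -/
theorem sum_Iic_eq_of_adjoint {α β M : Type*} [PartialOrder α] [LocallyFiniteOrderTop α]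
    [LocallyFiniteOrderBot α] [PartialOrder β] [LocallyFiniteOrderTop β]
    [LocallyFiniteOrderBot β] [AddCommMonoid M] [IsCancelAdd M] {f : α → M} {g : β → M}
    {s : α → β} {l u : β → α} {U : Set β} (hU : IsUpperSet U) (hU' : IsLowerSet U)
    (hl : ∀ y ∈ U, ∀ x, l y ≤ x ↔ y ≤ s x) (hu : ∀ y ∈ U, ∀ x, x ≤ u y ↔ s x ≤ y)
    (h : ∀ y ∈ U, ∑ z ∈ Ici y, g z = ∑ x ∈ Ici (l y), f x) {y : β} (hy : y ∈ U) :
    ∑ z ∈ Iic y, g z = ∑ x ∈ Iic (u y), f x := by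
  classical
  have h_fiber : ∀ z ∈ U, g z = ∑ x ∈ Ici (l z) with s x = z, f x := fun z hz ↦ by
    refine eq_of_forall_sum_Ici_eq (g := fun z ↦ ∑ x ∈ Ici (l z) with s x = z, f x) fun w hw ↦ ?_
    have hwU := hU hw hz
    rw [h w hwU,
      ← sum_fiberwise_of_maps_to fun x hx ↦ mem_Ici.mpr ((hl w hwU x).mp (mem_Ici.mp hx))]
    refine sum_congr rfl fun v hv ↦ sum_congr ?_ fun _ _ ↦ rfl
    have hv := mem_Ici.mp hv
    ext x
    simp only [mem_filter, mem_Ici, hl w hwU, hl v (hU hv hwU)]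
    exact and_congr_left fun h_eq ↦ by simp [h_eq, hv]
  rw [← sum_fiberwise_of_maps_to fun x hx ↦ mem_Iic.mpr ((hu y hy x).mp (mem_Iic.mp hx))]
  refine sum_congr rfl fun z hz ↦ ?_
  have hz := mem_Iic.mp hz
  rw [h_fiber z (hU' hz hy)]
  refine sum_congr ?_ fun _ _ ↦ rfl
  ext x
  simp only [mem_filter, mem_Iic, mem_Ici, hu y hy, hl z (hU' hz hy)]
  exact and_congr_left fun h_eq ↦ by simp [h_eq, hz]

end Order

open Relation

section Slots

/-- Sequences of `n` terms. The first constructor argument of `node` is the root of the first term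
and the second one is the sequence of its children, so that one inductive family encodes terms
and sequences of terms at once. -/
inductive Slots (S : Type*) (ar : S → ℕ) : ℕ → Type _
  | nil : Slots S ar 0
  | leaf {n : ℕ} (r : Slots S ar n) : Slots S ar (n + 1)
  | node {n : ℕ} (g : S) (c : Slots S ar (ar g)) (r : Slots S ar n) : Slots S ar (n + 1)

/-- Reduced terms, given by their root and the sequence of its children. -/
abbrev Tree (S : Type*) (ar : S → ℕ) := Σ g : S, Slots S ar (ar g)

/-- Reduced forests. -/
abbrev Forest (S : Type*) (ar : S → ℕ) := List (Tree S ar)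

variable {S : Type*} {ar : S → ℕ}

namespace Slots

/-- The number of internal nodes. -/
@[simp]
def degree : {n : ℕ} → Slots S ar n → ℕ
  | _, nil => 0
  | _, leaf r => degree r
  | _, node _ c r => degree c + degree r + 1

/-- The number of leaves. -/
@[simp]
def numLeaves : {n : ℕ} → Slots S ar n → ℕ
  | _, nil => 0
  | _, leaf r => numLeaves r + 1
  | _, node _ c r => numLeaves c + numLeaves r

/-- The decorations of the internal nodes, in preorder. -/
@[simp]
def decorations : {n : ℕ} → Slots S ar n → List S
  | _, nil => []
  | _, leaf r => decorations r
  | _, node g c r => g :: (decorations c ++ decorations r)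

/-- The number of pairs made of a leaf and an internal node coming after it in preorder. -/
@[simp]
def inversions : {n : ℕ} → Slots S ar n → ℕ
  | _, nil => 0
  | _, leaf r => degree r + inversions r
  | _, node _ c r => inversions c + numLeaves c * degree r + inversions r

/-- The sequence of `n` leaves. -/
@[simp]
def leaves : (n : ℕ) → Slots S ar n
  | 0 => nil
  | n + 1 => leaf (leaves n)

/-- Grafting of a tree onto the rightmost leaf of the last term. The tree is dropped when there is
no term. -/
@[simp]
def graft : {n : ℕ} → Slots S ar n → Tree S ar → Slots S ar n
  | _, nil, _ => nil
  | _, leaf (n := 0) r, t => node t.1 t.2 r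
  | _, leaf (n := _ + 1) r, t => leaf (graft r t)
  | _, node (n := 0) g c r, t => node g (graft c t) r
  | _, node (n := _ + 1) g c r, t => node g c (graft r t)

/-- The easterly wind move on sequences of terms. -/
inductive Move : {n : ℕ} → Slots S ar n → Slots S ar n → Prop
  | child {n : ℕ} {g : S} {c c' : Slots S ar (ar g)} {r : Slots S ar n} :
      Move c c' → Move (node g c r) (node g c' r)
  | nextLeaf {n : ℕ} {r r' : Slots S ar n} : Move r r' → Move (leaf r) (leaf r')
  | nextNode {n : ℕ} {g : S} {c : Slots S ar (ar g)} {r r' : Slots S ar n} :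
      Move r r' → Move (node g c r) (node g c r')
  | swap {n : ℕ} {g : S} {c : Slots S ar (ar g)} {r : Slots S ar n} :
      Move (leaf (node g c r)) (node g c (leaf r))
  | graft {n : ℕ} {g h : S} {c : Slots S ar (ar g)} {d : Slots S ar (ar h)} {r : Slots S ar n} :
      Move (node g c (node h d r)) (node g (c.graft ⟨h, d⟩) (leaf r))

/-- The easterly wind order on sequences of terms. -/
abbrev WindLE {n : ℕ} (x y : Slots S ar n) : Prop := ReflTransGen Move x y

end Slots

namespace Forest

/-- The number of internal nodes. -/
@[simp]
def degree : Forest S ar → ℕ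
  | [] => 0
  | t :: f => t.2.degree + degree f + 1

/-- The decorations of the internal nodes, in preorder. -/
@[simp]
def decorations : Forest S ar → List S
  | [] => []
  | t :: f => t.1 :: (t.2.decorations ++ decorations f)

/-- The number of pairs made of a leaf and an internal node coming after it in preorder. -/
@[simp]
def inversions : Forest S ar → ℕ
  | [] => 0
  | t :: f => t.2.inversions + t.2.numLeaves * degree f + inversions f

/-- The easterly wind move on reduced forests. -/
inductive Move : Forest S ar → Forest S ar → Prop
  | child {g : S} {c c' : Slots S ar (ar g)} {f : Forest S ar} :
      c.Move c' → Move (⟨g, c⟩ :: f) (⟨g, c'⟩ :: f)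
  | next {t : Tree S ar} {f f' : Forest S ar} : Move f f' → Move (t :: f) (t :: f')
  | graft {g : S} {c : Slots S ar (ar g)} {t : Tree S ar} {f : Forest S ar} :
      Move (⟨g, c⟩ :: t :: f) (⟨g, c.graft t⟩ :: f)

/-- The easterly wind order on reduced forests. -/
abbrev WindLE (f f' : Forest S ar) : Prop := ReflTransGen Move f f'

end Forest

namespace Slots

theorem eq_nil (x : Slots S ar 0) : x = nil := by
  cases x
  rfl

@[simp]
theorem degree_leaves (n : ℕ) : (leaves n : Slots S ar n).degree = 0 := by
  induction n with
  | zero => rfl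
  | succ _ ih => exact ih

theorem eq_leaves_of_degree_eq_zero {n : ℕ} {x : Slots S ar n} (hx : x.degree = 0) :
    x = leaves n := by
  induction x with
  | nil => rfl
  | leaf r ih => simp [ih hx]
  | node => simp at hx

theorem WindLE.child {n : ℕ} {g : S} {c c' : Slots S ar (ar g)} {r : Slots S ar n}
    (h : WindLE c c') : WindLE (node g c r) (node g c' r) :=
  h.lift (node g · r) fun _ _ ↦ Move.child

theorem WindLE.nextLeaf {n : ℕ} {r r' : Slots S ar n} (h : WindLE r r') :
    WindLE (leaf r) (leaf r') :=
  h.lift leaf fun _ _ ↦ Move.nextLeaf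

theorem WindLE.nextNode {n : ℕ} {g : S} {c : Slots S ar (ar g)} {r r' : Slots S ar n}
    (h : WindLE r r') : WindLE (node g c r) (node g c r') :=
  h.lift (node g c) fun _ _ ↦ Move.nextNode

theorem Move.degree_ne_zero {n : ℕ} {x y : Slots S ar n} (h : x.Move y) : x.degree ≠ 0 := by
  induction h <;> simp_all

end Slots

namespace Forest

theorem WindLE.child {g : S} {c c' : Slots S ar (ar g)} {f : Forest S ar} (h : c.WindLE c') :
    WindLE (⟨g, c⟩ :: f) (⟨g, c'⟩ :: f) :=
  h.lift (fun c ↦ (⟨g, c⟩ :: f : Forest S ar)) fun _ _ ↦ Move.child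

theorem WindLE.next {t : Tree S ar} {f f' : Forest S ar} (h : WindLE f f') :
    WindLE (t :: f) (t :: f') :=
  h.lift (t :: ·) fun _ _ ↦ Move.next

theorem WindLE.append_left {f f' : Forest S ar} (a : Forest S ar) (h : WindLE f f') :
    WindLE (a ++ f) (a ++ f') := by
  induction a with
  | nil => exact h
  | cons _ _ ih => exact ih.next

theorem Move.append_right {f f' : Forest S ar} (h : Move f f') (b : Forest S ar) :
    Move (f ++ b) (f' ++ b) := by
  induction h with
  | child h => exact .child h
  | next _ ih => exact .next ih
  | graft => exact .graft

theorem WindLE.append_right {f f' : Forest S ar} (h : WindLE f f') (b : Forest S ar) :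
    WindLE (f ++ b) (f' ++ b) :=
  h.lift (· ++ b) fun _ _ hm ↦ hm.append_right b

theorem WindLE.append {a a' b b' : Forest S ar} (ha : WindLE a a') (hb : WindLE b b') :
    WindLE (a ++ b) (a' ++ b') :=
  (ha.append_right b).trans (hb.append_left a')

end Forest

/-! ### Statistics along a move -/

section Statistics

variable [∀ g, NeZero (ar g)]

namespace Slots

theorem degree_graft {n : ℕ} (x : Slots S ar n) (hn : n ≠ 0) (t : Tree S ar) :
    (x.graft t).degree = x.degree + t.2.degree + 1 := by
  induction x with
  | nil => contradiction
  | @leaf n r ih =>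
    cases n with
    | zero => simp [r.eq_nil]
    | succ n => simp [ih]
  | @node n g c r ihc ihr =>
    cases n with
    | zero => simp [ihc (NeZero.ne _), r.eq_nil, add_right_comm]
    | succ n => simp [ihr]; lia

theorem numLeaves_graft {n : ℕ} (x : Slots S ar n) (hn : n ≠ 0) (t : Tree S ar) :
    (x.graft t).numLeaves + 1 = x.numLeaves + t.2.numLeaves := by
  induction x with
  | nil => contradiction
  | @leaf n r ih =>
    cases n with
    | zero => simp [r.eq_nil, add_comm]
    | succ n => simp [ih, add_right_comm]
  | @node n g c r ihc ihr =>
    cases n with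
    | zero => simp [ihc (NeZero.ne _), r.eq_nil]
    | succ n => simp [ihr, add_assoc]

theorem decorations_graft {n : ℕ} (x : Slots S ar n) (hn : n ≠ 0) (t : Tree S ar) :
    (x.graft t).decorations = x.decorations ++ t.1 :: t.2.decorations := by
  induction x with
  | nil => contradiction
  | @leaf n r ih =>
    cases n with
    | zero => simp [r.eq_nil]
    | succ n => simp [ih]
  | @node n g c r ihc ihr =>
    cases n with
    | zero => simp [ihc (NeZero.ne _), r.eq_nil]
    | succ n => simp [ihr]

theorem inversions_graft {n : ℕ} (x : Slots S ar n) (hn : n ≠ 0) (t : Tree S ar) :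
    (x.graft t).inversions + t.2.degree + 1 =
      x.inversions + x.numLeaves * (t.2.degree + 1) + t.2.inversions := by
  induction x with
  | nil => contradiction
  | @leaf n r ih =>
    cases n with
    | zero => simp [r.eq_nil]; lia
    | succ n => simp [degree_graft]; grind
  | @node n g c r ihc ihr =>
    cases n with
    | zero => simp [r.eq_nil, ihc (NeZero.ne _)]
    | succ n => simp [degree_graft]; grind

theorem Move.degree_eq {n : ℕ} {x y : Slots S ar n} (h : x.Move y) : x.degree = y.degree := by
  induction h with
  | child _ ih | nextLeaf _ ih | nextNode _ ih => simp [ih]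
  | swap => simp
  | graft => simp [degree_graft _ (NeZero.ne _)]; lia

theorem Move.numLeaves_eq {n : ℕ} {x y : Slots S ar n} (h : x.Move y) :
    x.numLeaves = y.numLeaves := by
  induction h with
  | child _ ih | nextLeaf _ ih | nextNode _ ih => simp [ih]
  | swap => simp [add_assoc]
  | @graft _ _ h c d _ => have := numLeaves_graft c (NeZero.ne _) ⟨h, d⟩; simp; lia

theorem Move.decorations_eq {n : ℕ} {x y : Slots S ar n} (h : x.Move y) :
    x.decorations = y.decorations := by
  induction h with
  | child _ ih | nextLeaf _ ih | nextNode _ ih => simp [ih]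
  | swap => simp
  | graft => simp [decorations_graft _ (NeZero.ne _)]

theorem Move.inversions_lt {n : ℕ} {x y : Slots S ar n} (h : x.Move y) :
    y.inversions < x.inversions := by
  induction h with
  | child h ih => simpa [h.numLeaves_eq] using ih
  | nextLeaf h ih | nextNode h ih => simpa [h.degree_eq] using ih
  | swap => simp; lia
  | @graft _ _ h c d r =>
    have h_inv := inversions_graft c (NeZero.ne _) ⟨h, d⟩
    have h_leaves := numLeaves_graft c (NeZero.ne _) ⟨h, d⟩
    have h_mul := congrArg (· * r.degree) h_leaves
    simp only [inversions, degree, add_mul] at h_inv h_mul ⊢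
    lia

end Slots

namespace Forest

theorem Move.degree_eq {f f' : Forest S ar} (h : Move f f') : degree f = degree f' := by
  induction h with
  | child h => simp [h.degree_eq]
  | next _ ih => simp [ih]
  | graft => simp [Slots.degree_graft _ (NeZero.ne _)]; lia

theorem Move.decorations_eq {f f' : Forest S ar} (h : Move f f') :
    decorations f = decorations f' := by
  induction h with
  | child h => simp [h.decorations_eq]
  | next _ ih => simp [ih]
  | graft => simp [Slots.decorations_graft _ (NeZero.ne _)]

theorem Move.inversions_lt {f f' : Forest S ar} (h : Move f f') :
    inversions f' < inversions f := by
  induction h with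
  | child h => simpa [h.numLeaves_eq] using h.inversions_lt
  | next h ih => simpa [h.degree_eq] using ih
  | @graft _ c t f =>
    have h_inv := Slots.inversions_graft c (NeZero.ne _) t
    have h_leaves := Slots.numLeaves_graft c (NeZero.ne _) t
    have h_mul := congrArg (· * degree f) h_leaves
    simp only [inversions, degree, add_mul] at h_mul ⊢
    lia

theorem WindLE.degree_eq {f f' : Forest S ar} (h : WindLE f f') : degree f = degree f' := by
  induction h with
  | refl => rfl
  | tail _ h ih => exact ih.trans h.degree_eq

theorem WindLE.decorations_eq {f f' : Forest S ar} (h : WindLE f f') :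
    decorations f = decorations f' := by
  induction h with
  | refl => rfl
  | tail _ h ih => exact ih.trans h.decorations_eq

theorem WindLE.inversions_le {f f' : Forest S ar} (h : WindLE f f') :
    inversions f' ≤ inversions f := by
  induction h with
  | refl => rfl
  | tail _ h ih => exact h.inversions_lt.le.trans ih

theorem WindLE.antisymm {f f' : Forest S ar} (h : WindLE f f') (h' : WindLE f' f) : f = f' := by
  obtain rfl | ⟨_, hm, hc⟩ := h.cases_head
  · rfl
  · exact absurd hm.inversions_lt (WindLE.inversions_le (hc.trans h')).not_gt

end Forest

end Statistics

/-! ### Splitting a forest after its first nodes in preorder -/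

namespace Slots

/-- The part of a sequence of terms made of its first `k` internal nodes in preorder. -/
@[simp]
def takeNodes : (k : ℕ) → {n : ℕ} → Slots S ar n → Slots S ar n
  | _, _, nil => nil
  | k, _, leaf r => leaf (takeNodes k r)
  | 0, _, node _ _ r => leaf (takeNodes 0 r)
  | k + 1, _, node g c r => node g (takeNodes k c) (takeNodes (k - c.degree) r)

/-- The forest made of all the internal nodes of a sequence of terms but its first `k` ones in
preorder. -/
@[simp]
def dropNodes : (k : ℕ) → {n : ℕ} → Slots S ar n → Forest S ar
  | _, _, nil => []
  | k, _, leaf r => dropNodes k r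
  | 0, _, node g c r => ⟨g, c⟩ :: dropNodes 0 r
  | k + 1, _, node _ c r => dropNodes k c ++ dropNodes (k - c.degree) r

end Slots

namespace Forest

/-- The part of a forest made of its first `k` internal nodes in preorder. -/
@[simp]
def takeNodes : ℕ → Forest S ar → Forest S ar
  | _, [] => []
  | 0, _ :: _ => []
  | k + 1, ⟨g, c⟩ :: f => ⟨g, c.takeNodes k⟩ :: takeNodes (k - c.degree) f

/-- The forest made of all the internal nodes of a forest but its first `k` ones in preorder. -/
@[simp]
def dropNodes : ℕ → Forest S ar → Forest S ar
  | _, [] => []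
  | 0, t :: f => t :: f
  | k + 1, ⟨_, c⟩ :: f => c.dropNodes k ++ dropNodes (k - c.degree) f

end Forest

namespace Slots

@[simp]
theorem takeNodes_zero {n : ℕ} (x : Slots S ar n) : x.takeNodes 0 = leaves n := by
  induction x with
  | nil => rfl
  | leaf _ ih | node _ _ _ _ ih => simp [ih]

theorem takeNodes_of_degree_le {n : ℕ} {x : Slots S ar n} {k : ℕ} (h : x.degree ≤ k) :
    x.takeNodes k = x := by
  induction x generalizing k with
  | nil => simp
  | leaf r ih => simp [ih h]
  | node g c r ihc ihr =>
    obtain _ | k := k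
    · simp at h
    · simp only [degree] at h
      simp [ihc (k := k) (by lia), ihr (k := k - c.degree) (by lia)]

theorem dropNodes_of_degree_le {n : ℕ} {x : Slots S ar n} {k : ℕ} (h : x.degree ≤ k) :
    x.dropNodes k = [] := by
  induction x generalizing k with
  | nil => simp
  | leaf r ih => simp [ih h]
  | node g c r ihc ihr =>
    obtain _ | k := k
    · simp at h
    · simp only [degree] at h
      simp [ihc (k := k) (by lia), ihr (k := k - c.degree) (by lia)]

theorem degree_takeNodes {n : ℕ} (x : Slots S ar n) (k : ℕ) :
    (x.takeNodes k).degree = min k x.degree := by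
  induction x generalizing k with
  | nil => simp
  | leaf r ih => simpa using ih k
  | node g c r ihc ihr =>
    obtain _ | k := k
    · simp
    · simp [ihr, ihc]; lia

theorem takeNodes_graft_of_le {n : ℕ} (x : Slots S ar n) (t : Tree S ar) {k : ℕ}
    (hk : k ≤ x.degree) : (x.graft t).takeNodes k = x.takeNodes k := by
  induction x generalizing k with
  | nil => simp
  | @leaf n r ih =>
    cases n with
    | zero =>
      obtain rfl : k = 0 := by simpa [r.eq_nil] using hk
      simp
    | succ n => simp [ih hk]
  | @node n g c r ihc ihr =>
    obtain _ | k := k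
    · simp
    · simp only [degree] at hk
      cases n with
      | zero =>
        obtain rfl := r.eq_nil
        simp only [degree] at hk
        simp [ihc (k := k) (by lia)]
      | succ n => simp [ihr (k := k - c.degree) (by lia)]

end Slots

namespace Forest

@[simp]
theorem takeNodes_zero (f : Forest S ar) : takeNodes 0 f = [] := by
  cases f <;> simp

@[simp]
theorem dropNodes_zero (f : Forest S ar) : dropNodes 0 f = f := by
  cases f <;> simp

theorem degree_takeNodes (f : Forest S ar) (k : ℕ) :
    degree (takeNodes k f) = min k (degree f) := by
  induction f generalizing k with
  | nil => simp
  | cons t f ih =>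
    obtain _ | k := k
    · simp
    · simp [ih, Slots.degree_takeNodes]; lia

theorem takeNodes_append (a b : Forest S ar) : takeNodes (degree a) (a ++ b) = a := by
  induction a with
  | nil => simp
  | cons t a ih => simp [ih, Slots.takeNodes_of_degree_le]

theorem dropNodes_append (a b : Forest S ar) : dropNodes (degree a) (a ++ b) = b := by
  induction a with
  | nil => simp
  | cons t a ih => simp [ih, Slots.dropNodes_of_degree_le]

end Forest

section Monotonicity

variable [∀ g, NeZero (ar g)]

namespace Slots

theorem takeNodes_graft_add {n : ℕ} (x : Slots S ar n) (hn : n ≠ 0) (t : Tree S ar) (k : ℕ) :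
    (x.graft t).takeNodes (x.degree + k + 1) = x.graft ⟨t.1, t.2.takeNodes k⟩ := by
  induction x with
  | nil => contradiction
  | @leaf n r ih =>
    cases n with
    | zero => simp [r.eq_nil]
    | succ n => simpa using ih
  | @node n g c r ihc ihr =>
    have h_add : (node g c r).degree + k + 1 = c.degree + r.degree + k + 1 + 1 := by
      simp; lia
    rw [h_add]
    cases n with
    | zero => simp [r.eq_nil, ihc (NeZero.ne _)]
    | succ n =>
      have h_sub : c.degree + r.degree + k + 1 - c.degree = r.degree + k + 1 := by lia
      have h_le : c.degree ≤ c.degree + r.degree + k + 1 := by lia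
      simp [h_sub, ihr, takeNodes_of_degree_le h_le]

theorem dropNodes_graft_add {n : ℕ} (x : Slots S ar n) (hn : n ≠ 0) (t : Tree S ar) (k : ℕ) :
    (x.graft t).dropNodes (x.degree + k + 1) = t.2.dropNodes k := by
  induction x with
  | nil => contradiction
  | @leaf n r ih =>
    cases n with
    | zero => simp [r.eq_nil]
    | succ n => simpa using ih
  | @node n g c r ihc ihr =>
    have h_add : (node g c r).degree + k + 1 = c.degree + r.degree + k + 1 + 1 := by
      simp; lia
    rw [h_add]
    cases n with
    | zero => simp [r.eq_nil, ihc (NeZero.ne _)]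
    | succ n =>
      have h_sub : c.degree + r.degree + k + 1 - c.degree = r.degree + k + 1 := by lia
      have h_le : c.degree ≤ c.degree + r.degree + k + 1 := by lia
      simp [h_sub, ihr, dropNodes_of_degree_le h_le]

theorem dropNodes_append_cons_windLE {n : ℕ} (x : Slots S ar n) (hn : n ≠ 0) (t : Tree S ar)
    (f : Forest S ar) {k : ℕ} (hk : k ≤ x.degree) :
    Forest.WindLE (x.dropNodes k ++ t :: f) ((x.graft t).dropNodes k ++ f) := by
  induction x generalizing k with
  | nil => contradiction
  | @leaf n r ih =>
    cases n with
    | zero =>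
      obtain rfl : k = 0 := by simpa [r.eq_nil] using hk
      simpa [r.eq_nil] using ReflTransGen.refl
    | succ n => simpa using ih (by simp) hk
  | @node n g c r ihc ihr =>
    obtain rfl | n := n
    · obtain rfl := r.eq_nil
      obtain _ | k := k
      · simpa using .single .graft
      · simpa using ihc (NeZero.ne _) (by simpa using hk)
    · obtain _ | k := k
      · simpa using (ihr (by simp) (Nat.zero_le _)).next
      · simp only [degree] at hk
        simpa using (ihr (by simp) (k := k - c.degree) (by lia)).append_left (c.dropNodes k)

theorem Move.takeNodes {n : ℕ} {x y : Slots S ar n} (h : x.Move y) (k : ℕ) :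
    WindLE (x.takeNodes k) (y.takeNodes k) := by
  induction h generalizing k with
  | child h ih =>
    obtain _ | k := k
    · simpa using .refl
    · simpa [h.degree_eq] using (ih k).child
  | nextLeaf _ ih => simpa using (ih k).nextLeaf
  | nextNode _ ih =>
    obtain _ | k := k
    · simpa using .refl
    · simpa using (ih _).nextNode
  | swap =>
    obtain _ | k := k
    · simpa using .refl
    · simpa using .single .swap
  | @graft n g h c d r =>
    obtain _ | k := k
    · simpa using .refl
    have h_degree := degree_graft c (NeZero.ne _) ⟨h, d⟩
    obtain hk | hk := le_or_gt k c.degree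
    · have h_sub : k - (c.graft ⟨h, d⟩).degree = 0 := by lia
      simpa [h_sub, takeNodes_graft_of_le _ _ hk, Nat.sub_eq_zero_of_le hk] using .refl
    · obtain ⟨m, rfl⟩ := Nat.exists_eq_add_of_lt hk
      have h_sub : c.degree + m + 1 - c.degree = m + 1 := by lia
      have h_sub' : c.degree + m + 1 - (c.graft ⟨h, d⟩).degree = m - d.degree := by lia
      simpa [h_sub, h_sub', takeNodes_graft_add _ (NeZero.ne _), takeNodes_of_degree_le hk.le]
        using .single .graft

theorem Move.dropNodes {n : ℕ} {x y : Slots S ar n} (h : x.Move y) (k : ℕ) :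
    Forest.WindLE (x.dropNodes k) (y.dropNodes k) := by
  induction h generalizing k with
  | child h ih =>
    obtain _ | k := k
    · simpa using .single (.child h)
    · simpa [h.degree_eq] using (ih k).append_right _
  | nextLeaf _ ih => simpa using ih k
  | nextNode _ ih =>
    obtain _ | k := k
    · simpa using (ih 0).next
    · simpa using (ih _).append_left _
  | swap =>
    obtain _ | k := k
    · simpa using .refl
    · simpa using .refl
  | @graft n g h c d r =>
    obtain _ | k := k
    · simpa using .single .graft
    have h_degree := degree_graft c (NeZero.ne _) ⟨h, d⟩
    obtain hk | hk := le_or_gt k c.degree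
    · have h_sub : k - (c.graft ⟨h, d⟩).degree = 0 := by lia
      simpa [h_sub, Nat.sub_eq_zero_of_le hk] using
        dropNodes_append_cons_windLE c (NeZero.ne _) ⟨h, d⟩ (r.dropNodes 0) hk
    · obtain ⟨m, rfl⟩ := Nat.exists_eq_add_of_lt hk
      have h_sub : c.degree + m + 1 - c.degree = m + 1 := by lia
      have h_sub' : c.degree + m + 1 - (c.graft ⟨h, d⟩).degree = m - d.degree := by lia
      simpa [h_sub, h_sub', dropNodes_graft_add _ (NeZero.ne _), dropNodes_of_degree_le hk.le]
        using .refl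

end Slots

namespace Forest

theorem Move.takeNodes {f f' : Forest S ar} (h : Move f f') (k : ℕ) :
    WindLE (takeNodes k f) (takeNodes k f') := by
  induction h generalizing k with
  | child h =>
    obtain _ | k := k
    · simpa using .refl
    · simpa [h.degree_eq] using WindLE.child (h.takeNodes k)
  | next _ ih =>
    obtain _ | k := k
    · simpa using .refl
    · simpa using (ih _).next
  | @graft g c t f =>
    obtain _ | k := k
    · simpa using .refl
    have h_degree := Slots.degree_graft c (NeZero.ne _) t
    obtain hk | hk := le_or_gt k c.degree
    · have h_sub : k - (c.graft t).degree = 0 := by lia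
      simpa [h_sub, Slots.takeNodes_graft_of_le _ _ hk, Nat.sub_eq_zero_of_le hk] using .refl
    · obtain ⟨m, rfl⟩ := Nat.exists_eq_add_of_lt hk
      have h_sub : c.degree + m + 1 - c.degree = m + 1 := by lia
      have h_sub' : c.degree + m + 1 - (c.graft t).degree = m - t.2.degree := by lia
      simpa [h_sub, h_sub', Slots.takeNodes_graft_add _ (NeZero.ne _),
        Slots.takeNodes_of_degree_le hk.le] using .single .graft

theorem Move.dropNodes {f f' : Forest S ar} (h : Move f f') (k : ℕ) :
    WindLE (dropNodes k f) (dropNodes k f') := by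
  induction h generalizing k with
  | child h =>
    obtain _ | k := k
    · simpa using .single (.child h)
    · simpa [h.degree_eq] using (h.dropNodes k).append_right _
  | next h ih =>
    obtain _ | k := k
    · simpa using .single (.next h)
    · simpa using (ih _).append_left _
  | @graft g c t f =>
    obtain _ | k := k
    · simpa using .single .graft
    have h_degree := Slots.degree_graft c (NeZero.ne _) t
    obtain hk | hk := le_or_gt k c.degree
    · have h_sub : k - (c.graft t).degree = 0 := by lia
      simpa [h_sub, Nat.sub_eq_zero_of_le hk] using
        Slots.dropNodes_append_cons_windLE c (NeZero.ne _) t f hk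
    · obtain ⟨m, rfl⟩ := Nat.exists_eq_add_of_lt hk
      have h_sub : c.degree + m + 1 - c.degree = m + 1 := by lia
      have h_sub' : c.degree + m + 1 - (c.graft t).degree = m - t.2.degree := by lia
      simpa [h_sub, h_sub', Slots.dropNodes_graft_add _ (NeZero.ne _),
        Slots.dropNodes_of_degree_le hk.le] using .refl

theorem WindLE.takeNodes {f f' : Forest S ar} (h : WindLE f f') (k : ℕ) :
    WindLE (takeNodes k f) (takeNodes k f') := by
  induction h with
  | refl => rfl
  | tail _ h ih => exact ih.trans (h.takeNodes k)

theorem WindLE.dropNodes {f f' : Forest S ar} (h : WindLE f f') (k : ℕ) :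
    WindLE (dropNodes k f) (dropNodes k f') := by
  induction h with
  | refl => rfl
  | tail _ h ih => exact ih.trans (h.dropNodes k)

end Forest

end Monotonicity

/-! ### The under product -/

/-- A forest whose first tree has lost its root, `n` being the arity of this root. -/
abbrev Headless (S : Type*) (ar : S → ℕ) (n : ℕ) := Slots S ar n × Forest S ar

namespace Headless

/-- The easterly wind move, seen on what remains of a forest when the root of its first tree is
removed. -/
inductive Move {n : ℕ} : Headless S ar n → Headless S ar n → Prop
  | slots {x y : Slots S ar n} {f : Forest S ar} : x.Move y → Move (x, f) (y, f)
  | graft {x : Slots S ar n} {t : Tree S ar} {f : Forest S ar} :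
      n ≠ 0 → Move (x, t :: f) (x.graft t, f)
  | forest {x : Slots S ar n} {f f' : Forest S ar} : f.Move f' → Move (x, f) (x, f')

/-- The easterly wind order on headless forests. -/
abbrev WindLE {n : ℕ} (p q : Headless S ar n) : Prop := ReflTransGen Move p q

theorem WindLE.slots {n : ℕ} {x y : Slots S ar n} {f : Forest S ar} (h : x.WindLE y) :
    WindLE (x, f) (y, f) :=
  h.lift (·, f) fun _ _ ↦ Move.slots

theorem WindLE.leaf {n : ℕ} {p q : Headless S ar n} (h : WindLE p q) :
    WindLE (p.1.leaf, p.2) (q.1.leaf, q.2) := by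
  refine h.lift (fun p ↦ (p.1.leaf, p.2)) fun _ _ hm ↦ ?_
  cases hm with
  | slots h => exact .slots (.nextLeaf h)
  | forest h => exact .forest h
  | graft hn =>
    obtain ⟨n, rfl⟩ := Nat.exists_eq_succ_of_ne_zero hn
    exact .graft (by simp)

theorem WindLE.node {n : ℕ} {g : S} {c : Slots S ar (ar g)} {p q : Headless S ar n}
    (h : WindLE p q) : WindLE (.node g c p.1, p.2) (.node g c q.1, q.2) := by
  refine h.lift (fun p ↦ (Slots.node g c p.1, p.2)) fun _ _ hm ↦ ?_
  cases hm with
  | slots h => exact .slots (.nextNode h)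
  | forest h => exact .forest h
  | graft hn =>
    obtain ⟨n, rfl⟩ := Nat.exists_eq_succ_of_ne_zero hn
    exact .graft (by simp)

theorem WindLE.cons {g : S} {p q : Headless S ar (ar g)} (h : WindLE p q) :
    Forest.WindLE (⟨g, p.1⟩ :: p.2) (⟨g, q.1⟩ :: q.2) := by
  refine h.lift (fun p ↦ (⟨g, p.1⟩ :: p.2 : Forest S ar)) fun _ _ hm ↦ ?_
  cases hm with
  | slots h => exact .child h
  | forest h => exact .next h
  | graft => exact .graft

end Headless

namespace Slots

/-- Grafting of the first trees of a forest onto the successive extremal leaves, together with the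
trees which are left when there is no remaining extremal leaf. -/
@[simp]
def fill : {n : ℕ} → Slots S ar n → Forest S ar → Headless S ar n
  | _, nil, f => (nil, f)
  | _, leaf r, [] => (leaf r, [])
  | _, leaf r, t :: f =>
      if r.degree = 0 then (node t.1 t.2 (fill r f).1, (fill r f).2)
      else (leaf (fill r (t :: f)).1, (fill r (t :: f)).2)
  | _, node g c r, f =>
      if r.degree = 0 then (node g (fill c f).1 (fill r (fill c f).2).1, (fill r (fill c f).2).2)
      else (node g c (fill r f).1, (fill r f).2)

end Slots

/-- Grafting of a root `g` at the head of a headless forest, followed by `n` leaves onto which the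
next trees are then grafted. -/
def Headless.extend (g : S) (n : ℕ) (p : Headless S ar (ar g)) : Headless S ar (n + 1) :=
  (.node g p.1 ((Slots.leaves n).fill p.2).1, ((Slots.leaves n).fill p.2).2)

/-- The under product of two reduced forests. -/
def Forest.under : Forest S ar → Forest S ar → Forest S ar
  | [], f => f
  | [⟨g, c⟩], f => ⟨g, (c.fill f).1⟩ :: (c.fill f).2
  | t :: t' :: a, f => t :: under (t' :: a) f

namespace Slots

@[simp]
theorem fill_nil {n : ℕ} (x : Slots S ar n) : x.fill [] = (x, []) := by
  induction x with
  | nil | leaf => simp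
  | node _ _ _ ihc ihr => simp [ihc, ihr]

theorem fill_leaf {n : ℕ} {r : Slots S ar n} (hr : r.degree ≠ 0) (f : Forest S ar) :
    (leaf r).fill f = (leaf (r.fill f).1, (r.fill f).2) := by
  cases f with
  | nil => simp
  | cons => simp [hr]

theorem graft_leaves_windLE (n : ℕ) (t : Tree S ar) :
    WindLE ((leaves (n + 1)).graft t) (node t.1 t.2 (leaves n)) := by
  induction n with
  | zero => exact .refl
  | succ n ih => exact ih.nextLeaf.tail .swap

theorem leaf_fill_leaves_windLE (n : ℕ) (f : Forest S ar) :
    Headless.WindLE (((leaves n).fill f).1.leaf, ((leaves n).fill f).2)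
      ((leaves (n + 1)).fill f) := by
  induction n generalizing f with
  | zero =>
    cases f with
    | nil => exact .refl
    | cons => exact .single (.graft one_ne_zero)
  | succ n ih =>
    cases f with
    | nil => simpa using .refl
    | cons t f => simpa using (Headless.WindLE.node (ih f)).head (.slots .swap)

end Slots

namespace Headless

theorem extend_graft_windLE (g : S) (n : ℕ) (c : Slots S ar (ar g)) (t : Tree S ar)
    (f : Forest S ar) :
    WindLE (extend g n (c, t :: f)) (extend g n (c.graft t, f)) := by
  cases n with
  | zero => exact .single (.graft one_ne_zero)
  | succ n =>
    have h_leaf := (Slots.leaf_fill_leaves_windLE n f).node (g := g) (c := c.graft t)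
    simpa [extend] using h_leaf.head (.slots .graft)

end Headless

theorem Forest.Move.fill_leaves_windLE {f f' : Forest S ar} (h : Move f f') (n : ℕ) :
    ((Slots.leaves n).fill f).WindLE ((Slots.leaves n).fill f') := by
  induction n generalizing f f' with
  | zero => exact .single (.forest h)
  | succ n ih =>
    cases h with
    | child h => simpa using .single (.slots (.child h))
    | next h => simpa using (ih h).node
    | @graft g c t f => simpa [Headless.extend] using Headless.extend_graft_windLE g n c t f

namespace Headless

theorem WindLE.extend {g : S} {p q : Headless S ar (ar g)} (h : p.WindLE q) (n : ℕ) :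
    (p.extend g n).WindLE (q.extend g n) := by
  induction h with
  | refl => rfl
  | tail _ hm ih =>
    refine ih.trans ?_
    cases hm with
    | slots h => exact .single (.slots (.child h))
    | graft => exact extend_graft_windLE ..
    | forest h => exact (h.fill_leaves_windLE n).node

theorem WindLE.node_leaves {g : S} {p q : Headless S ar (ar g)} (h : p.WindLE q) (n : ℕ) :
    WindLE (.node g p.1 (Slots.leaves n), p.2) (.node g q.1 (Slots.leaves n), q.2) := by
  induction h with
  | refl => rfl
  | tail _ hm ih =>
    refine ih.trans ?_
    cases hm with
    | slots h => exact .single (.slots (.child h))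
    | forest h => exact .single (.forest h)
    | @graft c t f =>
      obtain _ | n := n
      · exact .single (.graft one_ne_zero)
      · have h_graft := (Slots.graft_leaves_windLE n t).nextNode (g := g) (c := c)
        exact (WindLE.slots (h_graft.tail .graft)).head (.graft (by simp))

end Headless

theorem Slots.degree_le_degree_fill {n : ℕ} (x : Slots S ar n) (f : Forest S ar) :
    x.degree ≤ (x.fill f).1.degree := by
  induction x generalizing f with
  | nil => simp
  | leaf r ih =>
    by_cases hr : r.degree = 0
    · simp [hr]
    · simpa [fill_leaf hr] using ih f
  | node g c r ihc ihr =>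
    have := ihc f
    by_cases hr : r.degree = 0
    · simp [hr]; lia
    · simpa [hr] using ihr f

theorem Slots.takeNodes_fill {n : ℕ} (x : Slots S ar n) (f : Forest S ar) :
    (x.fill f).1.takeNodes x.degree = x := by
  induction x generalizing f with
  | nil => simp
  | leaf r ih =>
    by_cases hr : r.degree = 0
    · obtain rfl := eq_leaves_of_degree_eq_zero hr
      simp
    · simpa [fill_leaf hr] using ih f
  | node g c r ihc ihr =>
    by_cases hr : r.degree = 0
    · obtain rfl := eq_leaves_of_degree_eq_zero hr
      simp [ihc, Nat.sub_eq_zero_of_le (c.degree_le_degree_fill f)]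
    · simp [hr, ihr, takeNodes_of_degree_le (Nat.le_add_right _ _)]

theorem Slots.dropNodes_fill {n : ℕ} (x : Slots S ar n) (f : Forest S ar) :
    (x.fill f).1.dropNodes x.degree ++ (x.fill f).2 = f := by
  induction x generalizing f with
  | nil => simp
  | leaf r ih =>
    by_cases hr : r.degree = 0
    · have := ih f.tail
      cases f with
      | nil => simp [dropNodes_of_degree_le]
      | cons => simp_all
    · simpa [fill_leaf hr] using ih f
  | node g c r ihc ihr =>
    by_cases hr : r.degree = 0
    · have h_sub := Nat.sub_eq_zero_of_le (c.degree_le_degree_fill f)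
      have h_next := ihr (c.fill f).2
      rw [hr] at h_next
      simp [hr, h_sub, h_next, ihc]
    · simp [hr, ihr, dropNodes_of_degree_le (Nat.le_add_right _ _)]

namespace Forest

theorem under_cons (t : Tree S ar) {a : Forest S ar} (ha : a ≠ []) (f : Forest S ar) :
    under (t :: a) f = t :: under a f := by
  obtain ⟨t', a, rfl⟩ := List.exists_cons_of_ne_nil ha
  rfl

theorem takeNodes_under (a b : Forest S ar) : takeNodes (degree a) (under a b) = a := by
  induction a with
  | nil => simp
  | cons t a ih =>
    by_cases ha : a = []
    · subst ha
      simp [under, Slots.takeNodes_fill, Nat.sub_eq_zero_of_le (t.2.degree_le_degree_fill b)]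
    · simp [under_cons t ha, ih, Slots.takeNodes_of_degree_le]

theorem dropNodes_under (a b : Forest S ar) : dropNodes (degree a) (under a b) = b := by
  induction a with
  | nil => simp [under]
  | cons t a ih =>
    by_cases ha : a = []
    · subst ha
      simp [under, Slots.dropNodes_fill, Nat.sub_eq_zero_of_le (t.2.degree_le_degree_fill b)]
    · simp [under_cons t ha, ih, Slots.dropNodes_of_degree_le]

end Forest

namespace Slots

theorem takeNodes_append_dropNodes_windLE {n : ℕ} (x : Slots S ar n) (f : Forest S ar) (k : ℕ) :
    Headless.WindLE (x.takeNodes k, x.dropNodes k ++ f) (x, f) := by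
  induction x generalizing k f with
  | nil => simpa using .refl
  | leaf r ih => simpa using (ih f k).leaf
  | @node n g c r ihc ihr =>
    obtain _ | k := k
    · have h_graft : Headless.WindLE ((leaves (n + 1)).graft ⟨g, c⟩, r.dropNodes 0 ++ f)
          (node g c (leaves n), r.dropNodes 0 ++ f) := .slots (graft_leaves_windLE n ⟨g, c⟩)
      simpa using (h_graft.trans (by simpa using (ihr f 0).node)).head (.graft (by simp))
    obtain hk | hk := le_or_gt k c.degree
    · have h_child := (ihc (r.dropNodes 0 ++ f) k).node_leaves n
      have h_next := (ihr f 0).node (g := g) (c := c)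
      simpa [Nat.sub_eq_zero_of_le hk] using h_child.trans (by simpa using h_next)
    · simpa [takeNodes_of_degree_le hk.le, dropNodes_of_degree_le hk.le] using
        (ihr f (k - c.degree)).node

theorem windLE_fill_takeNodes {n : ℕ} (x : Slots S ar n) (f : Forest S ar) {k : ℕ}
    (hk : k ≤ x.degree) :
    Headless.WindLE (x, f) ((x.takeNodes k).fill (x.dropNodes k ++ f)) := by
  induction x generalizing k f with
  | nil => simpa using .refl
  | @leaf n r ih =>
    obtain rfl | hk0 := eq_or_ne k 0
    · have h_leaf := leaf_fill_leaves_windLE n (r.dropNodes 0 ++ f)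
      simpa using (ih f hk).leaf.trans (by simpa using h_leaf)
    · have h_degree : (r.takeNodes k).degree ≠ 0 := by
        rwa [degree_takeNodes, min_eq_left (by simpa using hk)]
      simpa [fill_leaf h_degree] using (ih f hk).leaf
  | @node n g c r ihc ihr =>
    obtain _ | k := k
    · simpa using (ihr f (Nat.zero_le _)).node
    obtain hkc | hkc := le_or_gt k c.degree
    · have h_next := (ihr f (Nat.zero_le _)).node (g := g) (c := c)
      have h_child := (ihc (r.dropNodes 0 ++ f) hkc).extend n
      simpa [Nat.sub_eq_zero_of_le hkc] using
        h_next.trans (by simpa [Headless.extend] using h_child)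
    · have h_degree : (r.takeNodes (k - c.degree)).degree ≠ 0 := by
        simp only [degree, degree_takeNodes] at hk ⊢; lia
      have hkr : k - c.degree ≤ r.degree := by simp only [degree] at hk; lia
      simpa [h_degree, takeNodes_of_degree_le hkc.le, dropNodes_of_degree_le hkc.le] using
        (ihr f hkr).node

end Slots

namespace Forest

theorem takeNodes_append_dropNodes_windLE (f : Forest S ar) (k : ℕ) :
    WindLE (takeNodes k f ++ dropNodes k f) f := by
  induction f generalizing k with
  | nil => simpa using .refl
  | cons t f ih =>
    obtain _ | k := k
    · simpa using .refl
    have h_next := (ih (k - t.2.degree)).next (t := t)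
    obtain hk | hk := le_or_gt k t.2.degree
    · simpa [Nat.sub_eq_zero_of_le hk] using (t.2.takeNodes_append_dropNodes_windLE f k).cons
    · simpa [Slots.takeNodes_of_degree_le hk.le, Slots.dropNodes_of_degree_le hk.le] using h_next

theorem windLE_under_takeNodes (f : Forest S ar) {k : ℕ} (hk : k ≤ degree f) :
    WindLE f (under (takeNodes k f) (dropNodes k f)) := by
  induction f generalizing k with
  | nil => simpa [under] using .refl
  | cons t f ih =>
    obtain _ | k := k
    · simpa [under] using .refl
    obtain hkt | hkt := le_or_gt k t.2.degree
    · simpa [under, Nat.sub_eq_zero_of_le hkt] using (t.2.windLE_fill_takeNodes f hkt).cons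
    · have hkf : k - t.2.degree ≤ degree f := by simp only [degree] at hk; lia
      have h_ne : takeNodes (k - t.2.degree) f ≠ [] := fun h_nil ↦ by
        have h_degree := degree_takeNodes f (k - t.2.degree)
        simp only [h_nil, degree] at h_degree
        lia
      simpa [Slots.takeNodes_of_degree_le hkt.le, Slots.dropNodes_of_degree_le hkt.le,
        under_cons _ h_ne] using (ih hkf).next

theorem Move.fill_windLE {f f' : Forest S ar} (h : Move f f') {n : ℕ} (x : Slots S ar n) :
    (x.fill f).WindLE (x.fill f') := by
  induction x with
  | nil => exact .single (.forest h)
  | @leaf n r ih =>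
    by_cases hr : r.degree = 0
    · obtain rfl := Slots.eq_leaves_of_degree_eq_zero hr
      exact h.fill_leaves_windLE (n + 1)
    · simpa [Slots.fill_leaf hr] using ih.leaf
  | @node n g c r ihc ihr =>
    by_cases hr : r.degree = 0
    · obtain rfl := Slots.eq_leaves_of_degree_eq_zero hr
      simpa [Headless.extend] using ihc.extend n
    · simpa [hr] using ihr.node

theorem Move.under_right {b b' : Forest S ar} (h : Move b b') (a : Forest S ar) :
    WindLE (under a b) (under a b') := by
  induction a with
  | nil => exact .single h
  | cons t a ih =>
    cases a with
    | nil => exact (h.fill_windLE t.2).cons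
    | cons => exact ih.next

end Forest

section Monotonicity

variable [∀ g, NeZero (ar g)]

namespace Slots

theorem fill_graft {n : ℕ} (x : Slots S ar n) (hn : n ≠ 0) (t : Tree S ar) (f : Forest S ar) :
    (x.graft t).fill f = (x.graft ⟨t.1, (t.2.fill f).1⟩, (t.2.fill f).2) := by
  induction x with
  | nil => contradiction
  | @leaf n r ih =>
    cases n with
    | zero => simp [r.eq_nil]
    | succ n =>
      have h_degree : (r.graft t).degree ≠ 0 := by simp [degree_graft]
      simp [fill_leaf h_degree, ih]
  | @node n g c r ihc ihr =>
    cases n with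
    | zero => simp [r.eq_nil, ihc (NeZero.ne _)]
    | succ n => simp [degree_graft, ihr]

theorem Move.fill_windLE {n : ℕ} {x y : Slots S ar n} (h : x.Move y) (f : Forest S ar) :
    (x.fill f).WindLE (y.fill f) := by
  induction h with
  | @child n g c c' r h ih =>
    by_cases hr : r.degree = 0
    · obtain rfl := eq_leaves_of_degree_eq_zero hr
      simpa [Headless.extend] using ih.extend n
    · simpa [hr] using .single (.slots (.child h))
  | nextLeaf h ih =>
    rw [fill_leaf h.degree_ne_zero, fill_leaf (h.degree_eq ▸ h.degree_ne_zero)]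
    exact ih.leaf
  | nextNode h ih => simpa [h.degree_ne_zero, h.degree_eq ▸ h.degree_ne_zero] using ih.node
  | @swap n g c r =>
    rw [fill_leaf (by simp)]
    by_cases hr : r.degree = 0
    · obtain rfl := eq_leaves_of_degree_eq_zero hr
      have h_leaf := (leaf_fill_leaves_windLE n (c.fill f).2).node (g := g) (c := (c.fill f).1)
      simpa using h_leaf.head (.slots .swap)
    · simpa [hr, fill_leaf hr] using .single (.slots .swap)
  | @graft n g h c d r =>
    by_cases hr : r.degree = 0
    · obtain rfl := eq_leaves_of_degree_eq_zero hr
      have h_leaf := (leaf_fill_leaves_windLE n (d.fill f).2).node (g := g)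
        (c := c.graft ⟨h, (d.fill f).1⟩)
      simpa [fill_graft _ (NeZero.ne _)] using h_leaf.head (.slots .graft)
    · simpa [hr, fill_leaf hr] using .single (.slots .graft)

end Slots

namespace Forest

theorem Move.under_left {a a' : Forest S ar} (h : Move a a') (b : Forest S ar) :
    WindLE (under a b) (under a' b) := by
  induction h with
  | @child g c c' f h =>
    cases f with
    | nil => exact (h.fill_windLE b).cons
    | cons => exact .single (.child h)
  | @next t f f' h ih =>
    have hf : f ≠ [] := by rintro rfl; cases h
    have hf' : f' ≠ [] := by rintro rfl; cases h
    simpa [under_cons t hf, under_cons t hf'] using ih.next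
  | @graft g c t f =>
    cases f with
    | nil => simpa [under, Slots.fill_graft _ (NeZero.ne _)] using .single .graft
    | cons => exact .single .graft

theorem WindLE.under {a a' b b' : Forest S ar} (ha : WindLE a a') (hb : WindLE b b') :
    WindLE (under a b) (under a' b') := by
  trans Forest.under a' b
  · induction ha with
    | refl => rfl
    | tail _ h ih => exact ih.trans (h.under_left b)
  · induction hb with
    | refl => rfl
    | tail _ h ih => exact ih.trans (h.under_right a')

theorem append_windLE_iff {a b f : Forest S ar} :
    WindLE (a ++ b) f ↔
      WindLE a (takeNodes (degree a) f) ∧ WindLE b (dropNodes (degree a) f) := by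
  constructor
  · intro h
    have h_take := h.takeNodes (degree a)
    have h_drop := h.dropNodes (degree a)
    rw [takeNodes_append] at h_take
    rw [dropNodes_append] at h_drop
    exact ⟨h_take, h_drop⟩
  · rintro ⟨h_take, h_drop⟩
    exact (h_take.append h_drop).trans (takeNodes_append_dropNodes_windLE f _)

theorem windLE_under_iff {a b f : Forest S ar} :
    WindLE f (under a b) ↔
      WindLE (takeNodes (degree a) f) a ∧ WindLE (dropNodes (degree a) f) b := by
  constructor
  · intro h
    have h_take := h.takeNodes (degree a)
    have h_drop := h.dropNodes (degree a)
    rw [takeNodes_under] at h_take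
    rw [dropNodes_under] at h_drop
    exact ⟨h_take, h_drop⟩
  · rintro ⟨h_take, h_drop⟩
    have h_degree : degree a ≤ degree f := by
      rw [← h_take.degree_eq, degree_takeNodes]
      exact min_le_right _ _
    exact (windLE_under_takeNodes f h_degree).trans (h_take.under h_drop)

end Forest

end Monotonicity

/-! ### The easterly wind poset -/

namespace Slots

theorem finite_setOf_degree_le {A : Set S} (hA : A.Finite) (d n : ℕ) :
    {x : Slots S ar n | x.degree ≤ d ∧ ∀ s ∈ x.decorations, s ∈ A}.Finite := by
  induction d generalizing n with
  | zero =>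
    refine (Set.finite_singleton (leaves n)).subset ?_
    rintro x ⟨hx, -⟩
    exact eq_leaves_of_degree_eq_zero (Nat.le_zero.mp hx)
  | succ d ih =>
    induction n with
    | zero => exact (Set.finite_singleton nil).subset fun x _ ↦ x.eq_nil
    | succ n ihn =>
      refine ((ihn.image leaf).union
        (hA.biUnion fun g _ ↦ .image2 (node g) (ih (ar g)) (ih n))).subset ?_
      rintro x ⟨h_degree, h_mem⟩
      cases x with
      | leaf r => exact .inl ⟨r, ⟨h_degree, h_mem⟩, rfl⟩
      | node g c r =>
        simp only [degree, decorations, List.forall_mem_cons, List.forall_mem_append]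
          at h_degree h_mem
        exact .inr <| Set.mem_biUnion h_mem.1
          ⟨c, ⟨by lia, h_mem.2.1⟩, r, ⟨by lia, h_mem.2.2⟩, rfl⟩

end Slots

theorem Forest.finite_setOf_degree_le {A : Set S} (hA : A.Finite) (d : ℕ) :
    {f : Forest S ar | degree f ≤ d ∧ ∀ s ∈ decorations f, s ∈ A}.Finite := by
  induction d with
  | zero =>
    refine (Set.finite_singleton []).subset ?_
    rintro (_ | _) ⟨h_degree, -⟩
    · rfl
    · simp at h_degree
  | succ d ih =>
    refine ((Set.finite_singleton []).union (hA.biUnion fun g _ ↦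
      .image2 (fun c f ↦ (⟨g, c⟩ :: f : Forest S ar))
        (Slots.finite_setOf_degree_le hA d (ar g)) ih)).subset ?_
    rintro (_ | ⟨⟨g, c⟩, f⟩) ⟨h_degree, h_mem⟩
    · exact .inl rfl
    · simp only [degree, decorations, List.forall_mem_cons, List.forall_mem_append]
        at h_degree h_mem
      exact .inr <| Set.mem_biUnion h_mem.1
        ⟨c, ⟨by lia, h_mem.2.1⟩, f, ⟨by lia, h_mem.2.2⟩, rfl⟩

namespace Forest

variable [∀ g, NeZero (ar g)]

/-- The easterly wind order. -/
instance : PartialOrder (Forest S ar) where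
  le := WindLE
  le_refl _ := .refl
  le_trans _ _ _ := .trans
  le_antisymm _ _ := WindLE.antisymm

theorem finite_Ici (f : Forest S ar) : (Set.Ici f).Finite :=
  (finite_setOf_degree_le (decorations f).finite_toSet (degree f)).subset fun _ h ↦
    ⟨(WindLE.degree_eq h).ge, fun _ hs ↦ WindLE.decorations_eq h ▸ hs⟩

theorem finite_Iic (f : Forest S ar) : (Set.Iic f).Finite :=
  (finite_setOf_degree_le (decorations f).finite_toSet (degree f)).subset fun _ h ↦
    ⟨(WindLE.degree_eq h).le, fun _ hs ↦ WindLE.decorations_eq h ▸ hs⟩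

noncomputable instance : LocallyFiniteOrderTop (Forest S ar) := by
  classical exact .ofIci _ (fun f ↦ (finite_Ici f).toFinset) (by simp)

noncomputable instance : LocallyFiniteOrderBot (Forest S ar) := by
  classical exact .ofIic _ (fun f ↦ (finite_Iic f).toFinset) (by simp)

end Forest

end Slots

/-! ### Terms as trees -/

section Terms

variable {S : Type} {ar : S → ℕ}

namespace Slots

/-- The terms of a sequence. -/
@[simp]
def terms : {n : ℕ} → Slots S ar n → Fin n → STerm S ar
  | _, nil => Fin.elim0
  | _, leaf r => Fin.cons .leaf (terms r)
  | _, node g c r => Fin.cons (.node g (terms c)) (terms r)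

theorem terms_injective {n : ℕ} :
    Function.Injective (terms : Slots S ar n → Fin n → STerm S ar) := by
  intro x y h
  induction x with
  | nil => exact y.eq_nil.symm
  | leaf r ih =>
    cases y with
    | leaf r' => rw [ih (Fin.cons_inj.mp h).2]
    | node => exact nomatch (Fin.cons_inj.mp h).1
  | node g c r ihc ihr =>
    cases y with
    | leaf => exact nomatch (Fin.cons_inj.mp h).1
    | node g' c' r' =>
      obtain ⟨h_head, h_tail⟩ := Fin.cons_inj.mp h
      simp only [STerm.node.injEq] at h_head
      obtain ⟨rfl, h_head⟩ := h_head
      rw [ihc (eq_of_heq h_head), ihr h_tail]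

theorem exists_terms_eq_of_forall {n : ℕ} (c : Fin n → STerm S ar)
    (hc : ∀ i, c i = .leaf ∨ ∃ (g : S) (d : Slots S ar (ar g)), c i = .node g d.terms) :
    ∃ x : Slots S ar n, x.terms = c := by
  induction c using Fin.consInduction with
  | elim0 => exact ⟨nil, rfl⟩
  | cons t c ih =>
    obtain ⟨r, rfl⟩ := ih fun i ↦ hc i.succ
    obtain rfl | ⟨g, d, rfl⟩ := hc 0
    · exact ⟨leaf r, rfl⟩
    · exact ⟨node g d r, rfl⟩

theorem _root_.STerm.eq_leaf_or_exists_eq_node_terms (t : STerm S ar) :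
    t = .leaf ∨ ∃ (g : S) (d : Slots S ar (ar g)), t = .node g d.terms := by
  induction t with
  | leaf => exact .inl rfl
  | node g c ih =>
    obtain ⟨d, rfl⟩ := exists_terms_eq_of_forall c ih
    exact .inr ⟨g, d, rfl⟩

theorem terms_surjective {n : ℕ} :
    Function.Surjective (terms : Slots S ar n → Fin n → STerm S ar) :=
  fun c ↦ exists_terms_eq_of_forall c fun i ↦ (c i).eq_leaf_or_exists_eq_node_terms

/-- The sequence whose terms are the entries of a tuple. -/
noncomputable def ofTerms {n : ℕ} (c : Fin n → STerm S ar) : Slots S ar n :=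
  (terms_surjective c).choose

@[simp]
theorem terms_ofTerms {n : ℕ} (c : Fin n → STerm S ar) : (ofTerms c).terms = c :=
  (terms_surjective c).choose_spec

@[simp]
theorem ofTerms_terms {n : ℕ} (x : Slots S ar n) : ofTerms x.terms = x :=
  terms_injective (terms_ofTerms _)

@[simp]
theorem ofTerms_cons_leaf {n : ℕ} (c : Fin n → STerm S ar) :
    ofTerms (Fin.cons .leaf c : Fin (n + 1) → STerm S ar) = leaf (ofTerms c) :=
  terms_injective (by simp)

@[simp]
theorem ofTerms_cons_node {n : ℕ} (g : S) (d : Fin (ar g) → STerm S ar) (c : Fin n → STerm S ar) :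
    ofTerms (Fin.cons (.node g d) c : Fin (n + 1) → STerm S ar) =
      node g (ofTerms d) (ofTerms c) :=
  terms_injective (by simp)

theorem terms_graft {n : ℕ} (x : Slots S ar n) (t : Tree S ar) (i : Fin n) :
    (x.graft t).terms i =
      if (i : ℕ) = n - 1 then (x.terms i).graftRight (.node t.1 t.2.terms) else x.terms i := by
  induction x with
  | nil => exact i.elim0
  | @leaf n r ih =>
    obtain _ | n := n
    · obtain rfl := Fin.fin_one_eq_zero i
      simp [STerm.graftRight]
    · cases i using Fin.cases <;> simp [ih]
  | @node n g c r ihc ihr =>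
    obtain _ | n := n
    · obtain rfl := Fin.fin_one_eq_zero i
      simp [STerm.graftRight, funext ihc]
    · cases i using Fin.cases <;> simp [ihr]

theorem node_terms_graft (g : S) (c : Slots S ar (ar g)) (t : Tree S ar) :
    STerm.node g (c.graft t).terms =
      (STerm.node g c.terms).graftRight (.node t.1 t.2.terms) := by
  simp [STerm.graftRight, funext (c.terms_graft t)]

end Slots

namespace Tree

/-- The terms other than the leaf are the trees. -/
noncomputable def equivRTerm : Tree S ar ≃ RTerm S ar where
  toFun t := ⟨.node t.1 t.2.terms, nofun⟩
  invFun
    | ⟨.node g c, _⟩ => ⟨g, .ofTerms c⟩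
  left_inv t := by simp
  right_inv
    | ⟨.node g c, _⟩ => by simp

end Tree

/-! ### Comparison of the moves -/

theorem update_cons_cons_one {α : Type*} {n : ℕ} (a b b' : α) (c : Fin n → α) :
    Function.update (Fin.cons a (Fin.cons b c) : Fin (n + 2) → α) 1 b' =
      Fin.cons a (Fin.cons b' c : Fin (n + 1) → α) := by
  rw [← Fin.succ_zero_eq_one, ← Fin.cons_update, Fin.update_cons_zero]

/-- The easterly wind move on the children of a node. -/
def TupleMove {n : ℕ} (c c' : Fin n → STerm S ar) : Prop :=
  (∃ i t, STerm.TermMove (c i) t ∧ c' = Function.update c i t) ∨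
  ∃ j j' : Fin n, (j' : ℕ) = j + 1 ∧ c j' ≠ .leaf ∧
    c' = Function.update (Function.update c j ((c j).graftRight (c j'))) j' .leaf

namespace TupleMove

theorem termMove_node {g : S} {c c' : Fin (ar g) → STerm S ar} (h : TupleMove c c') :
    STerm.TermMove (.node g c) (.node g c') := by
  obtain ⟨i, t, h, rfl⟩ | ⟨j, j', hj, hne, rfl⟩ := h
  · exact .child g c i t h
  · exact .here g c j j' hj hne

theorem head {n : ℕ} {t t' : STerm S ar} (h : STerm.TermMove t t') (c : Fin n → STerm S ar) :
    TupleMove (Fin.cons t c : Fin (n + 1) → STerm S ar) (Fin.cons t' c) :=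
  .inl ⟨0, t', h, (Fin.update_cons_zero ..).symm⟩

theorem tail {n : ℕ} {c c' : Fin n → STerm S ar} (h : TupleMove c c') (t : STerm S ar) :
    TupleMove (Fin.cons t c : Fin (n + 1) → STerm S ar) (Fin.cons t c') := by
  obtain ⟨i, s, h, rfl⟩ | ⟨j, j', hj, hne, rfl⟩ := h
  · exact .inl ⟨i.succ, s, h, Fin.cons_update ..⟩
  · exact .inr ⟨j.succ, j'.succ, by simp [hj], hne, by simp [Fin.cons_update]⟩

theorem graftRight {n : ℕ} (t : STerm S ar) {t' : STerm S ar} (ht' : t' ≠ .leaf)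
    (c : Fin n → STerm S ar) :
    TupleMove (Fin.cons t (Fin.cons t' c) : Fin (n + 2) → STerm S ar)
      (Fin.cons (t.graftRight t') (Fin.cons .leaf c)) :=
  .inr ⟨0, 1, rfl, ht', by simp [update_cons_cons_one]⟩

end TupleMove

theorem Slots.Move.tupleMove_terms {n : ℕ} {x y : Slots S ar n} (h : x.Move y) :
    TupleMove x.terms y.terms := by
  induction h with
  | child _ ih => exact .head ih.termMove_node _
  | nextLeaf _ ih | nextNode _ ih => exact ih.tail _
  | swap => exact .graftRight .leaf (by simp) _
  | @graft n g h c d r =>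
    simpa [node_terms_graft] using
      TupleMove.graftRight (.node g c.terms) (t' := .node h d.terms) (by simp) r.terms

namespace Slots

theorem Move.ofTerms_cons {n : ℕ} {c c' : Fin n → STerm S ar} (h : Move (ofTerms c) (ofTerms c'))
    (t : STerm S ar) :
    Move (ofTerms (Fin.cons t c : Fin (n + 1) → STerm S ar)) (ofTerms (Fin.cons t c')) := by
  cases t with
  | leaf => simpa using h.nextLeaf
  | node => simpa using h.nextNode

theorem move_ofTerms_update {n : ℕ} (c : Fin n → STerm S ar) (i : Fin n) {t : STerm S ar}
    (h : ∀ {m : ℕ} (d : Fin m → STerm S ar),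
      Move (ofTerms (Fin.cons (c i) d : Fin (m + 1) → STerm S ar)) (ofTerms (Fin.cons t d))) :
    Move (ofTerms c) (ofTerms (Function.update c i t)) := by
  induction c using Fin.consInduction with
  | elim0 => exact i.elim0
  | cons s c ih =>
    cases i using Fin.cases with
    | zero => simpa using h c
    | succ i =>
      rw [← Fin.cons_update]
      exact (ih i h).ofTerms_cons s

theorem move_ofTerms_graftRight {n : ℕ} (t : STerm S ar) {t' : STerm S ar} (ht' : t' ≠ .leaf)
    (c : Fin n → STerm S ar) :
    Move (ofTerms (Fin.cons t (Fin.cons t' c) : Fin (n + 2) → STerm S ar))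
      (ofTerms (Fin.cons (t.graftRight t') (Fin.cons .leaf c) : Fin (n + 2) → STerm S ar)) := by
  cases t' with
  | leaf => contradiction
  | node h d =>
    cases t with
    | leaf => simpa [STerm.graftRight] using .swap
    | node g e =>
      have h_graft : (ofTerms e).graft ⟨h, ofTerms d⟩ = ofTerms fun i ↦
          if (i : ℕ) = ar g - 1 then (e i).graftRight (.node h d) else e i :=
        terms_injective (funext fun i ↦ by simp [terms_graft])
      simpa [STerm.graftRight, ← h_graft] using .graft

theorem move_ofTerms_update_graftRight {n : ℕ} (c : Fin n → STerm S ar) {j j' : Fin n}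
    (hj : (j' : ℕ) = j + 1) (hne : c j' ≠ .leaf) :
    Move (ofTerms c) (ofTerms
      (Function.update (Function.update c j ((c j).graftRight (c j'))) j' .leaf)) := by
  induction c using Fin.consInduction with
  | elim0 => exact j.elim0
  | @cons n s c ih =>
    obtain ⟨j', rfl⟩ := Fin.exists_succ_eq.mpr (show j' ≠ 0 by rintro rfl; simp at hj)
    cases j using Fin.cases with
    | zero =>
      cases c using Fin.consInduction with
      | elim0 => exact j'.elim0
      | cons s' c =>
        obtain rfl : j' = 0 := by ext; simpa using hj
        simpa [update_cons_cons_one] using move_ofTerms_graftRight s hne c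
    | succ j =>
      simpa [← Fin.cons_update] using (ih (by simpa using hj) hne).ofTerms_cons s

end Slots

theorem _root_.STerm.TermMove.move_ofTerms_cons {t t' : STerm S ar} (h : t.TermMove t') {n : ℕ}
    (c : Fin n → STerm S ar) :
    Slots.Move (.ofTerms (Fin.cons t c : Fin (n + 1) → STerm S ar)) (.ofTerms (Fin.cons t' c)) := by
  induction h generalizing n with
  | here g d j j' hj hne => simpa using .child (Slots.move_ofTerms_update_graftRight d hj hne)
  | child g d i t' _ ih => simpa using .child (Slots.move_ofTerms_update d i ih)

namespace Forest

/-- The reduced forests are the lists of reduced terms. -/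
noncomputable def equivRTerms : Forest S ar ≃ List (RTerm S ar) :=
  Tree.equivRTerm.listEquivOfEquiv

/-- The terms of a forest. -/
noncomputable def toTerms (f : Forest S ar) : List (STerm S ar) :=
  (equivRTerms f).map Subtype.val

/-- The forest made of the terms of a list which are not the leaf. -/
noncomputable def ofTerms (l : List (STerm S ar)) : Forest S ar :=
  equivRTerms.symm (rdF l)

@[simp]
theorem toTerms_nil : toTerms ([] : Forest S ar) = [] := rfl

@[simp]
theorem toTerms_cons (t : Tree S ar) (f : Forest S ar) :
    toTerms (t :: f) = .node t.1 t.2.terms :: toTerms f := rfl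

@[simp]
theorem toTerms_append (a b : Forest S ar) : toTerms (a ++ b) = toTerms a ++ toTerms b := by
  induction a with
  | nil => rfl
  | cons t a ih => simp [ih]

@[simp]
theorem toTerms_drop (f : Forest S ar) (n : ℕ) : toTerms (f.drop n) = (toTerms f).drop n := by
  induction f generalizing n with
  | nil => simp
  | cons t f ih => cases n <;> simp [ih]

@[simp]
theorem ofTerms_node_cons (g : S) (c : Fin (ar g) → STerm S ar) (l : List (STerm S ar)) :
    ofTerms (.node g c :: l) = ⟨g, .ofTerms c⟩ :: ofTerms l := rfl

theorem rdF_toTerms (f : Forest S ar) : rdF (toTerms f) = equivRTerms f := by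
  induction f with
  | nil => rfl
  | cons t f ih => exact congrArg (Tree.equivRTerm t :: ·) ih

theorem ofTerms_toTerms (f : Forest S ar) : ofTerms (toTerms f) = f := by
  rw [ofTerms, rdF_toTerms, Equiv.symm_apply_apply]

theorem _root_.ForestMove.cons {l l' : List (STerm S ar)} (h : ForestMove l l') (t : STerm S ar) :
    ForestMove (t :: l) (t :: l') := by
  cases h with
  | root p s s' q hs => exact .root (t :: p) s s' q hs
  | tree p s s' q hs => exact .tree (t :: p) s s' q hs

theorem Move.forestMove_toTerms {f f' : Forest S ar} (h : Move f f') :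
    ForestMove (toTerms f) (toTerms f') := by
  induction h with
  | child h => exact .tree [] _ _ _ h.tupleMove_terms.termMove_node
  | next _ ih => exact ih.cons _
  | @graft g c t f =>
    simpa [Slots.node_terms_graft] using
      ForestMove.root [] (.node g c.terms) (.node t.1 t.2.terms) (toTerms f) nofun

theorem WindLE.ofTerms_append {l l' : List (STerm S ar)} (h : WindLE (ofTerms l) (ofTerms l'))
    (p : List (STerm S ar)) : WindLE (ofTerms (p ++ l)) (ofTerms (p ++ l')) := by
  induction p with
  | nil => exact h
  | cons t p ih =>
    cases t with
    | leaf => exact ih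
    | node => exact ih.next

theorem _root_.STerm.TermMove.windLE_ofTerms {t t' : STerm S ar} (h : t.TermMove t')
    (l : List (STerm S ar)) : WindLE (ofTerms (t :: l)) (ofTerms (t' :: l)) := by
  cases h with
  | here g c j j' hj hne =>
    exact .single (.child (Slots.move_ofTerms_update_graftRight c hj hne))
  | child g c i t' h => exact .single (.child (Slots.move_ofTerms_update c i h.move_ofTerms_cons))

theorem windLE_ofTerms_graftRight (t t' : STerm S ar) (ht' : t' ≠ .leaf) (l : List (STerm S ar)) :
    WindLE (ofTerms (t :: t' :: l)) (ofTerms (t.graftRight t' :: l)) := by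
  obtain rfl | ⟨g, c, rfl⟩ := t.eq_leaf_or_exists_eq_node_terms
  · exact .refl
  obtain rfl | ⟨h, d, rfl⟩ := t'.eq_leaf_or_exists_eq_node_terms
  · contradiction
  · simpa [← Slots.node_terms_graft g c ⟨h, d⟩] using .single .graft

theorem _root_.ForestMove.windLE_ofTerms {l l' : List (STerm S ar)} (h : ForestMove l l') :
    WindLE (ofTerms l) (ofTerms l') := by
  cases h with
  | root p t t' q ht' => exact (windLE_ofTerms_graftRight t t' ht' q).ofTerms_append p
  | tree p t t' q ht => exact (ht.windLE_ofTerms q).ofTerms_append p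

theorem ewLe_toTerms_iff {f f' : Forest S ar} :
    EWLe (toTerms f) (toTerms f') ↔ WindLE f f' := by
  refine ⟨fun h ↦ ?_, fun h ↦ h.lift toTerms fun _ _ ↦ Move.forestMove_toTerms⟩
  have h_of : WindLE (ofTerms (toTerms f)) (ofTerms (toTerms f')) :=
    h.lift' ofTerms fun _ _ ↦ ForestMove.windLE_ofTerms
  rwa [ofTerms_toTerms, ofTerms_toTerms] at h_of

end Forest

/-! ### Comparison of the under products -/

namespace Slots

/-- The number of leaves coming after every internal node in preorder. -/
@[simp]
def numExtremalLeaves : {n : ℕ} → Slots S ar n → ℕ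
  | _, nil => 0
  | _, leaf r => if r.degree = 0 then numExtremalLeaves r + 1 else numExtremalLeaves r
  | _, node _ c r =>
      if r.degree = 0 then numExtremalLeaves c + numExtremalLeaves r else numExtremalLeaves r

/-- The preorder traversal word: `none` for leaves, `some g` for an internal node decorated by
`g`. -/
@[simp]
def preorder : {n : ℕ} → Slots S ar n → List (Option S)
  | _, nil => []
  | _, leaf r => none :: preorder r
  | _, node g c r => some g :: (preorder c ++ preorder r)

theorem sum_arity_terms {n : ℕ} (x : Slots S ar n) : ∑ i, (x.terms i).arity = x.numLeaves := by
  induction x with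
  | nil => rfl
  | leaf r ih => simp [Fin.sum_univ_succ, STerm.arity, ih, add_comm]
  | node g c r ihc ihr => simp [Fin.sum_univ_succ, STerm.arity, ihc, ihr]

theorem flatten_preo_terms {n : ℕ} (x : Slots S ar n) :
    (List.ofFn fun i ↦ (x.terms i).preo).flatten = x.preorder := by
  induction x with
  | nil => rfl
  | leaf r ih => simp [STerm.preo, ih]
  | node g c r ihc ihr => simp [STerm.preo, ihc, ihr]

theorem numExtremalLeaves_of_degree_eq_zero {n : ℕ} {x : Slots S ar n} (hx : x.degree = 0) :
    x.numExtremalLeaves = x.numLeaves := by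
  induction x with
  | nil => rfl
  | leaf r ih => simp_all
  | node => simp at hx

theorem numExtremalLeaves_le_numLeaves {n : ℕ} (x : Slots S ar n) :
    x.numExtremalLeaves ≤ x.numLeaves := by
  induction x with
  | nil => rfl
  | leaf r ih => simp only [numExtremalLeaves, numLeaves]; split_ifs <;> lia
  | node g c r ihc ihr => simp only [numExtremalLeaves, numLeaves]; split_ifs <;> lia

theorem length_preorder {n : ℕ} (x : Slots S ar n) :
    x.preorder.length = x.numLeaves + x.degree := by
  induction x with
  | nil => rfl
  | leaf r ih => simp [ih, add_right_comm]
  | node g c r ihc ihr => simp [ihc, ihr]; lia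

theorem numExtremalLeaves_eq_length_preorder_iff {n : ℕ} {x : Slots S ar n} :
    x.numExtremalLeaves = x.preorder.length ↔ x.degree = 0 := by
  rw [length_preorder]
  refine ⟨fun h ↦ ?_, fun h ↦ by rw [h, numExtremalLeaves_of_degree_eq_zero h, add_zero]⟩
  have := x.numExtremalLeaves_le_numLeaves
  lia

theorem length_takeWhile_reverse_preorder {n : ℕ} (x : Slots S ar n) :
    (x.preorder.reverse.takeWhile fun o ↦ o.isNone).length = x.numExtremalLeaves := by
  induction x with
  | nil => rfl
  | leaf r ih =>
    simp only [preorder, List.reverse_cons, List.takeWhile_append, ih, List.length_reverse,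
      numExtremalLeaves_eq_length_preorder_iff, numExtremalLeaves]
    split_ifs with hr
    · simp [numExtremalLeaves_eq_length_preorder_iff.mpr hr]
    · exact ih
  | node g c r ihc ihr =>
    simp only [preorder, List.reverse_cons, List.reverse_append, List.append_assoc,
      List.takeWhile_append, ihr, ihc, List.length_reverse,
      numExtremalLeaves_eq_length_preorder_iff, numExtremalLeaves]
    split_ifs with hr hc
    · simp [numExtremalLeaves_eq_length_preorder_iff.mpr hr,
        numExtremalLeaves_eq_length_preorder_iff.mpr hc, add_comm]
    · simp [numExtremalLeaves_eq_length_preorder_iff.mpr hr, ihc, add_comm]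
    · exact ihr

theorem arity_node_terms {g : S} (c : Slots S ar (ar g)) :
    (STerm.node g c.terms).arity = c.numLeaves :=
  c.sum_arity_terms

theorem extremalCount_node_terms {g : S} (c : Slots S ar (ar g)) :
    (STerm.node g c.terms).extremalCount = c.numExtremalLeaves := by
  rw [← length_takeWhile_reverse_preorder, STerm.extremalCount, STerm.preo, flatten_preo_terms,
    List.reverse_cons, List.takeWhile_append]
  split_ifs with h <;> simp [h]

theorem fill_snd {n : ℕ} (x : Slots S ar n) (f : Forest S ar) :
    (x.fill f).2 = f.drop x.numExtremalLeaves := by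
  induction x generalizing f with
  | nil => rfl
  | leaf r ih =>
    by_cases hr : r.degree = 0
    · cases f <;> simp [hr, ih]
    · simp [fill_leaf hr, hr, ih]
  | node g c r ihc ihr => by_cases hr : r.degree = 0 <;> simp [hr, ihc, ihr]

end Slots

/-- Grafting of the entries of a list onto the successive leaves of the entries of a tuple. -/
def graftTuple {n : ℕ} (d : Fin n → STerm S ar) (l : List (STerm S ar)) (i : Fin n) : STerm S ar :=
  (d i).graftList
    ((l.drop (∑ j : Fin n, if (j : ℕ) < (i : ℕ) then (d j).arity else 0)).take (d i).arity)

theorem graftList_node (g : S) (c : Fin (ar g) → STerm S ar) (l : List (STerm S ar)) :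
    (STerm.node g c).graftList l = .node g (graftTuple c l) := rfl

theorem graftTuple_cons {n : ℕ} (t : STerm S ar) (d : Fin n → STerm S ar)
    (l : List (STerm S ar)) :
    graftTuple (Fin.cons t d : Fin (n + 1) → STerm S ar) l =
      Fin.cons (t.graftList (l.take t.arity)) (graftTuple d (l.drop t.arity)) := by
  ext i
  cases i using Fin.cases <;> simp [graftTuple, Fin.sum_univ_succ]

theorem graftTuple_take {n : ℕ} (d : Fin n → STerm S ar) (l : List (STerm S ar)) :
    graftTuple d (l.take (∑ i, (d i).arity)) = graftTuple d l := by
  induction d using Fin.consInduction generalizing l with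
  | elim0 => exact funext fun i ↦ i.elim0
  | cons t d ih => simp [graftTuple_cons, Fin.sum_univ_succ, List.take_take, List.drop_take, ih]

theorem graftList_replicate_leaf (t : STerm S ar) (m : ℕ) :
    t.graftList (.replicate m .leaf) = t := by
  induction t generalizing m with
  | leaf => cases m <;> rfl
  | node g c ih => simp [STerm.graftList, ih]

theorem graftTuple_replicate_leaf {n : ℕ} (d : Fin n → STerm S ar) (m : ℕ) :
    graftTuple d (.replicate m .leaf) = d := by
  simp [funext_iff, graftTuple, graftList_replicate_leaf]

theorem graftList_congr (t : STerm S ar) {l l' : List (STerm S ar)}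
    (h : ∀ p, l.getD p .leaf = l'.getD p .leaf) : t.graftList l = t.graftList l' := by
  induction t generalizing l l' with
  | leaf => simpa [STerm.graftList, List.head?_eq_getElem?] using h 0
  | node g c ih =>
    simp only [List.getD_eq_getElem?_getD] at h ih
    simp only [STerm.graftList, STerm.node.injEq, heq_eq_eq, true_and]
    refine funext fun i ↦ ih i fun p ↦ ?_
    simp only [List.getElem?_take, List.getElem?_drop]
    split_ifs
    · exact h _
    · rfl

theorem Slots.graftTuple_terms_fill {n : ℕ} (x : Slots S ar n) (f : Forest S ar) :
    graftTuple x.terms (.replicate (x.numLeaves - x.numExtremalLeaves) .leaf ++ f.toTerms) =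
      (x.fill f).1.terms := by
  induction x generalizing f with
  | nil => exact funext fun i ↦ i.elim0
  | leaf r ih =>
    by_cases hr : r.degree = 0
    · simp only [numExtremalLeaves_of_degree_eq_zero hr, Nat.sub_self] at ih
      cases f with
      | nil => simpa [hr, graftTuple_cons, numExtremalLeaves_of_degree_eq_zero, STerm.arity,
          STerm.graftList, fill_nil] using ih []
      | cons t f => simpa [hr, graftTuple_cons, numExtremalLeaves_of_degree_eq_zero, STerm.arity,
          STerm.graftList] using ih f
    · simp [hr, graftTuple_cons, STerm.arity, STerm.graftList, fill_leaf, ih,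
        Nat.sub_add_comm r.numExtremalLeaves_le_numLeaves, List.replicate_succ]
  | node g c r ihc ihr =>
    by_cases hr : r.degree = 0
    · have h_take := graftTuple_take c.terms
      have h_drop : c.numLeaves - (c.numLeaves - c.numExtremalLeaves) = c.numExtremalLeaves :=
        Nat.sub_sub_self c.numExtremalLeaves_le_numLeaves
      have ihr := ihr (f.drop c.numExtremalLeaves)
      rw [sum_arity_terms] at h_take
      rw [numExtremalLeaves_of_degree_eq_zero hr, Nat.sub_self] at ihr
      simp_all [graftTuple_cons, graftList_node, arity_node_terms, fill_snd,
        numExtremalLeaves_of_degree_eq_zero, List.drop_append, Nat.add_sub_add_right]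
    · have h_sub : c.numLeaves + r.numLeaves - r.numExtremalLeaves =
          c.numLeaves + (r.numLeaves - r.numExtremalLeaves) :=
        Nat.add_sub_assoc r.numExtremalLeaves_le_numLeaves _
      simp [hr, graftTuple_cons, graftList_node, arity_node_terms, graftTuple_replicate_leaf,
        h_sub, List.take_append, List.drop_append, ihr]

theorem _root_.STerm.underSub_node_terms {g : S} (c : Slots S ar (ar g)) (f : Forest S ar) :
    underSub (.node g c.terms) (f.toTerms.take c.numExtremalLeaves) =
      .node g (c.fill f).1.terms := by
  rw [← Slots.graftTuple_terms_fill, ← graftTuple_take, Slots.sum_arity_terms, ← graftList_node]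
  refine graftList_congr _ fun p ↦ ?_
  have h_le := c.numExtremalLeaves_le_numLeaves
  simp only [List.getD_eq_getElem?_getD, List.getElem?_ofFn, Slots.arity_node_terms,
    Slots.extremalCount_node_terms, List.getElem?_take, List.getElem?_append, List.length_replicate,
    List.getElem?_replicate]
  grind

namespace Forest

theorem under_append_singleton (a : Forest S ar) (t : Tree S ar) (f : Forest S ar) :
    under (a ++ [t]) f = a ++ under [t] f := by
  induction a with
  | nil => rfl
  | cons s a ih => rw [List.cons_append, under_cons _ (by simp), ih, List.cons_append]

theorem underP_toTerms (a b : Forest S ar) :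
    underP (toTerms a) (toTerms b) = toTerms (under a b) := by
  obtain rfl | ⟨a, ⟨g, c⟩, rfl⟩ := a.eq_nil_or_concat
  · rfl
  · simp [underP, under_append_singleton, under, Slots.extremalCount_node_terms,
      STerm.underSub_node_terms, Slots.fill_snd]

end Forest

end Terms

/-! ### Product of the homogeneous basis -/

open Finset

namespace Forest

theorem sum_Iic_mul_sum_Iic {S R : Type*} {ar : S → ℕ} [∀ g, NeZero (ar g)]
    [NonUnitalNonAssocSemiring R] [IsCancelAdd R] {F : Forest S ar → R}
    (hF : ∀ a b, (∑ f ∈ Ici a, F f) * ∑ f ∈ Ici b, F f = ∑ f ∈ Ici (a ++ b), F f)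
    (a b : Forest S ar) :
    (∑ f ∈ Iic a, F f) * ∑ f ∈ Iic b, F f = ∑ f ∈ Iic (under a b), F f := by
  classical
  let U : Set (Forest S ar × Forest S ar) := {p | degree p.1 = degree a}
  have hU : IsUpperSet U := fun p q h hp ↦ (WindLE.degree_eq h.1).symm.trans hp
  have hU' : IsLowerSet U := fun p q h hp ↦ (WindLE.degree_eq h.1).trans hp
  have h_Ici : ∀ p ∈ U, ∑ q ∈ Ici p, F q.1 * F q.2 = ∑ f ∈ Ici (p.1 ++ p.2), F f := fun p _ ↦ by
    rw [← hF, sum_mul_sum, ← sum_product', Ici_product_Ici]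
  have h_Iic := sum_Iic_eq_of_adjoint (l := fun p ↦ p.1 ++ p.2) (u := fun p ↦ under p.1 p.2)
    (s := fun f ↦ (takeNodes (degree a) f, dropNodes (degree a) f)) hU hU'
    (fun p hp f ↦ (show degree p.1 = degree a from hp) ▸ append_windLE_iff)
    (fun p hp f ↦ (show degree p.1 = degree a from hp) ▸ windLE_under_iff)
    h_Ici (y := (a, b)) rfl
  rw [sum_mul_sum, ← sum_product', ← h_Iic, Iic_product_Iic]

variable {S : Type} {ar : S → ℕ}

theorem map_val_equivRTerms (f : Forest S ar) :
    (equivRTerms f).map Subtype.val = f.toTerms := rfl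

theorem equivRTerms_append (a b : Forest S ar) :
    equivRTerms (a ++ b) = equivRTerms a ++ equivRTerms b :=
  List.map_append

variable [∀ g, NeZero (ar g)] {M : Type*} [AddCommMonoid M]

theorem finsum_mem_ewLe_eq_sum_Ici (F : List (RTerm S ar) → M) (f : Forest S ar) :
    ∑ᶠ l ∈ {l | EWLe f.toTerms (l.map Subtype.val)}, F l =
      ∑ f' ∈ Ici f, F (equivRTerms f') := by
  rw [← finsum_mem_coe_finset, coe_Ici, ← finsum_comp_equiv equivRTerms]
  exact finsum_congr fun f' ↦ finsum_congr_Prop (propext ewLe_toTerms_iff) fun _ ↦ rfl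

theorem finsum_mem_ewLe_eq_sum_Iic (F : List (RTerm S ar) → M) (f : Forest S ar) :
    ∑ᶠ l ∈ {l | EWLe (l.map Subtype.val) f.toTerms}, F l =
      ∑ f' ∈ Iic f, F (equivRTerms f') := by
  rw [← finsum_mem_coe_finset, coe_Iic, ← finsum_comp_equiv equivRTerms]
  exact finsum_congr fun f' ↦ finsum_congr_Prop (propext ewLe_toTerms_iff) fun _ ↦ rfl

end Forest

theorem EBasis_append {𝕂 S : Type} [CommSemiring 𝕂] {ar : S → ℕ} (f f' : List (RTerm S ar)) :
    EBasis 𝕂 (f ++ f') = EBasis 𝕂 f * EBasis 𝕂 f' := by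
  rw [EBasis, FreeMonoid.ofList_append, map_mul]; rfl

end EasterlyWind

open EasterlyWind Forest in
theorem Hbasis_product_general {S : Type} {ar : S → ℕ} (hpos : ∀ g : S, 0 < ar g)
    (𝕂 : Type) [CommRing 𝕂]
    (F H : List (RTerm S ar) → NAlg 𝕂 S ar)
    (hF : ∀ f : List (RTerm S ar),
      EBasis 𝕂 f =
        ∑ᶠ f' ∈ {f' : List (RTerm S ar) |
            EWLe (f.map Subtype.val) (f'.map Subtype.val)}, F f')
    (hH : ∀ f : List (RTerm S ar),
      H f =
        ∑ᶠ f' ∈ {f' : List (RTerm S ar) |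
            EWLe (f'.map Subtype.val) (f.map Subtype.val)}, F f')
    (f' f'' : List (RTerm S ar)) :
    H f' * H f'' = H (rdF (underP (f'.map Subtype.val) (f''.map Subtype.val))) := by
  have : ∀ g, NeZero (ar g) := fun g ↦ ⟨(hpos g).ne'⟩
  obtain ⟨a, rfl⟩ := equivRTerms.surjective f'
  obtain ⟨b, rfl⟩ := equivRTerms.surjective f''
  have hE (f) : EBasis 𝕂 (equivRTerms f) = ∑ x ∈ .Ici f, F (equivRTerms x) := by
    rw [hF, map_val_equivRTerms, finsum_mem_ewLe_eq_sum_Ici]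
  have hH (f) : H (equivRTerms f) = ∑ x ∈ .Iic f, F (equivRTerms x) := by
    rw [hH, map_val_equivRTerms, finsum_mem_ewLe_eq_sum_Iic]
  rw [map_val_equivRTerms, map_val_equivRTerms, underP_toTerms, rdF_toTerms, hH, hH, hH]
  exact sum_Iic_mul_sum_Iic (fun a b ↦ by rw [← hE, ← hE, ← hE, equivRTerms_append, EBasis_append])
    a b

/-- product rule for the homogeneous basis `H`: `H_{f'} · H_{f''} = H_{f' △ f''}`.
Here `F` is characterized (by Möbius inversion for the easterly wind order, whose upper sets
are finite) by `E_f = Σ_{f ≼ f'} F_{f'}`, and `H_f := Σ_{f' ≼ f} F_{f'}`. -/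
theorem Hbasis_product {S : Type} {ar : S → ℕ} (hpos : ∀ g : S, 0 < ar g)
    (𝕂 : Type) [Field 𝕂] [CharZero 𝕂]
    (F H : List (RTerm S ar) → NAlg 𝕂 S ar)
    (hF : ∀ f : List (RTerm S ar),
      EBasis 𝕂 f =
        ∑ᶠ f' ∈ {f' : List (RTerm S ar) |
            EWLe (f.map Subtype.val) (f'.map Subtype.val)}, F f')
    (hH : ∀ f : List (RTerm S ar),
      H f =
        ∑ᶠ f' ∈ {f' : List (RTerm S ar) |
            EWLe (f'.map Subtype.val) (f.map Subtype.val)}, F f')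
    (f' f'' : List (RTerm S ar)) :
    H f' * H f'' = H (rdF (underP (f'.map Subtype.val) (f''.map Subtype.val))) :=
  Hbasis_product_general hpos 𝕂 F H hF hH f' f''
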